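/- Let Σ_A(ℕ) be a topologically mixing, finitely primitive (BIP) countable Markov shift, f : Σ_A(ℕ) → ℝ satisfying the Walters condition with Var_1 f < ∞ and P(f) < ∞, admitting a unique maximizing measure. Set g_β := βf + log h_β − log(h_β∘σ) − P(βf) and R_− := f + V − V∘σ − m(f) for a bounded calibrated sub-action V. Then (g_β)/β converges to R_− uniformly on compact sets as β → ∞, and there is a sequence of numbers (M_n) with M_n → 0 such that for all large n and all β: Var_n(g_β/β) ≤ M_n and Var_n(R_−) ≤ M_n; furthermore Var_{n+k}(R_−^n) ≤ Var_{n+k}(S_n f) + M_{n+k} + M_k, where R_−^n = Σ_{j=0}^{n−1} R_−∘σ^j. -/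

import Mathlib

open Filter Topology MeasureTheory
open scoped ENNReal

/-- The countable Markov shift over alphabet ℕ determined by the 0-1 matrix `A`. -/
def MarkovShift (A : ℕ → ℕ → Bool) : Type :=
  {x : ℕ → ℕ // ∀ i, A (x i) (x (i + 1)) = true}

namespace MarkovShift

variable {A : ℕ → ℕ → Bool}

instance : TopologicalSpace (MarkovShift A) :=
  instTopologicalSpaceSubtype

instance : MeasurableSpace (MarkovShift A) := borel _

instance : BorelSpace (MarkovShift A) := ⟨rfl⟩

/-- The shift map. -/
def shift (x : MarkovShift A) : MarkovShift A :=
  ⟨fun n => x.1 (n + 1), fun i => x.2 (i + 1)⟩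

/-- The cylinder set determined by a finite word. -/
def cylinder (w : List ℕ) : Set (MarkovShift A) :=
  {x | ∀ i : Fin w.length, x.1 i = w.get i}

/-- The cylinder set determined by the first `m` coordinates of `x`. -/
def cylOf (x : MarkovShift A) (m : ℕ) : Set (MarkovShift A) :=
  {y | ∀ i < m, y.1 i = x.1 i}

/-- A symbol is admissible when its cylinder is nonempty. -/
def Admissible (A : ℕ → ℕ → Bool) (a : ℕ) : Prop :=
  ∃ x : MarkovShift A, x.1 0 = a

/-- Topologically mixing. -/
def TopologicallyMixing (A : ℕ → ℕ → Bool) : Prop :=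
  ∀ a b : ℕ, Admissible A a → Admissible A b →
    ∃ N : ℕ, ∀ n ≥ N, ∃ x : MarkovShift A, x.1 0 = a ∧ (shift^[n] x).1 0 = b

/-- Finitely primitive (BIP). -/
def FinitelyPrimitive (A : ℕ → ℕ → Bool) : Prop :=
  ∃ (K₀ : ℕ) (F : Finset ℕ), ∀ a b : ℕ, Admissible A a → Admissible A b →
    ∃ w : List ℕ, w.length = K₀ ∧ (∀ c ∈ w, c ∈ F) ∧
      List.Chain' (fun u v => A u v = true) (a :: (w ++ [b]))

/-- First coordinate where two distinct points disagree. -/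
noncomputable def firstDiff (x y : MarkovShift A) (h : x ≠ y) : ℕ :=
  Nat.find (Function.ne_iff.mp (fun hxy : x.1 = y.1 => h (Subtype.ext hxy)))

open Classical in
/-- The metric `d(x,y) = r^{t(x,y)}`. -/
noncomputable def dist' (r : ℝ) (x y : MarkovShift A) : ℝ :=
  if h : x = y then 0 else r ^ firstDiff x y h

/-- Birkhoff sum `S_n f`. -/
def birkhoff (f : MarkovShift A → ℝ) (n : ℕ) (x : MarkovShift A) : ℝ :=
  ∑ j ∈ Finset.range n, f (shift^[j] x)

/-- The set of values `|S_n f x - S_n f y|` over pairs agreeing on the first `m` coordinates. -/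
def varSet (f : MarkovShift A → ℝ) (n m : ℕ) : Set ℝ :=
  {c | ∃ x y : MarkovShift A, (∀ i < m, x.1 i = y.1 i) ∧ c = |birkhoff f n x - birkhoff f n y|}

/-- `Var_m (S_n f)`. -/
noncomputable def varBirk (f : MarkovShift A → ℝ) (n m : ℕ) : ℝ := sSup (varSet f n m)

/-- `Var_1 f < ∞`. -/
def Var1Finite (f : MarkovShift A → ℝ) : Prop := BddAbove (varSet f 1 1)

/-- The set whose supremum is `sup_{n ≥ 1} Var_{n+k}(S_n f)`. -/
def waltersSet (f : MarkovShift A → ℝ) (k : ℕ) : Set ℝ :=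
  {c | ∃ n, 1 ≤ n ∧ c ∈ varSet f n (n + k)}

/-- `M_k = sup_{n ≥ 1} Var_{n+k}(S_n f)`. -/
noncomputable def waltersSup (f : MarkovShift A → ℝ) (k : ℕ) : ℝ := sSup (waltersSet f k)

/-- The Walters condition. -/
def SatisfiesWalters (f : MarkovShift A → ℝ) : Prop :=
  (∀ k, 1 ≤ k → BddAbove (waltersSet f k)) ∧
    Tendsto (fun k => waltersSup f k) atTop (𝓝 0)

/-- The partition function `Z_n(f,a) = Σ_{σ^n x = x, x₀ = a} e^{S_n f (x)}`. -/
noncomputable def partitionSum (f : MarkovShift A → ℝ) (n : ℕ) (a : ℕ) : ℝ :=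
  ∑' x : {x : MarkovShift A // shift^[n] x = x ∧ x.1 0 = a}, Real.exp (birkhoff f n x.1)

/-- `f` has (finite) Gurevich pressure `p`. -/
def HasGurevichPressure (f : MarkovShift A → ℝ) (p : ℝ) : Prop :=
  ∀ a : ℕ, Admissible A a →
    (∀ n, 1 ≤ n → Summable fun x : {x : MarkovShift A // shift^[n] x = x ∧ x.1 0 = a} =>
        Real.exp (birkhoff f n x.1)) ∧
    Tendsto (fun n : ℕ => (1 / (n : ℝ)) * Real.log (partitionSum f n a)) atTop (𝓝 p)

/-- σ-invariant Borel probability measure. -/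
def IsInvariantProb (μ : Measure (MarkovShift A)) : Prop :=
  IsProbabilityMeasure μ ∧ μ.map shift = μ

/-- `m(f)`, the maximal ergodic average. -/
noncomputable def mf (f : MarkovShift A → ℝ) : ℝ :=
  sSup {c | ∃ μ : Measure (MarkovShift A),
    IsInvariantProb μ ∧ Integrable f μ ∧ ∫ x, f x ∂μ = c}

/-- A maximizing measure for `f`. -/
def IsMaximizing (f : MarkovShift A → ℝ) (μ : Measure (MarkovShift A)) : Prop :=
  IsInvariantProb μ ∧ Integrable f μ ∧ ∫ x, f x ∂μ = mf f

/-- Bounded real valued function. -/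
def BoundedFun (g : MarkovShift A → ℝ) : Prop := ∃ C, ∀ x, |g x| ≤ C

/-- A bounded calibrated sub-action for `f`. -/
def IsCalibratedSubaction (f V : MarkovShift A → ℝ) : Prop :=
  Continuous V ∧ BoundedFun V ∧
    (∀ x, f x + V x - V (shift x) - mf f ≤ 0) ∧
    (∀ y, ∃ x, shift x = y ∧ f x + V x - V (shift x) - mf f = 0)

/-- The Ruelle transfer operator `(L_g u)(x) = Σ_{σ y = x} e^{g(y)} u(y)`. -/
noncomputable def ruelle (g u : MarkovShift A → ℝ) (x : MarkovShift A) : ℝ :=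
  ∑' y : {y : MarkovShift A // shift y = x}, Real.exp (g y.1) * u y.1

/-- Ruelle-Perron-Frobenius data for the potential `f` with pressure `p`:
eigenfunction `h`, eigenmeasure `ν`. -/
def IsRPF (f : MarkovShift A → ℝ) (p : ℝ) (h : MarkovShift A → ℝ)
    (ν : Measure (MarkovShift A)) : Prop :=
  Continuous h ∧ (∀ x, 0 < h x) ∧
    (∀ x, ruelle f h x = Real.exp p * h x) ∧
    IsProbabilityMeasure ν ∧
    (∀ g : MarkovShift A → ℝ, Continuous g → BoundedFun g →
      ∫ x, ruelle f g x ∂ν = Real.exp p * ∫ x, g x ∂ν) ∧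
    ∫ x, h x ∂ν = 1

/-- The Gibbs measure `dμ = h dν`. -/
noncomputable def gibbs (h : MarkovShift A → ℝ) (ν : Measure (MarkovShift A)) :
    Measure (MarkovShift A) :=
  ν.withDensity fun x => ENNReal.ofReal (h x)

/-- The Mañé potential `S_f(x,y)` (with respect to the metric of parameter `r`). -/
noncomputable def manePot (r : ℝ) (f : MarkovShift A → ℝ) (x y : MarkovShift A) : EReal :=
  ⨅ ε : {ε : ℝ // 0 < ε}, ⨆ n : {n : ℕ // 1 ≤ n},
    ⨆ _z : {z : MarkovShift A // dist' r x z < ε.1 ∧ shift^[n.1] z = y},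
      ((birkhoff (fun w => f w - mf f) n.1 _z.1 : ℝ) : EReal)

/-- The (topological) support of a measure. -/
def msupport (μ : Measure (MarkovShift A)) : Set (MarkovShift A) :=
  {x | ∀ U : Set (MarkovShift A), IsOpen U → x ∈ U → 0 < μ U}

end MarkovShift

/-!
Write `g_β / β = f + V_β - V_β ∘ σ - P(βf) / β` with `V_β = log h_β / β`. The point is that `V_β`
inherits from `f` a modulus of continuity and a bound on its oscillation which do not depend on `β`:
the eigenfunction `h_β` is a limit of iterates `exp (-N P(βf)) L^N u`, whose regularity is that of
Birkhoff sums, and points in different cylinders are joined by bridging words of bounded length.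
Hence, along any ultrafilter `β → ∞`, the functions `V_β`, up to additive constants, and the numbers
`P(βf) / β` converge. Since `exp g_β` sums to `1` over each fibre of `σ`, the limit is a calibrated
sub-action. Following its calibrated backward orbits yields a maximizing measure, so uniqueness of
that measure forces the limit to be `V` up to a constant, whatever the ultrafilter.
-/

theorem exists_tendsto_of_eventually_mem_of_isCompact {ι X : Type*} [TopologicalSpace X]
    {U : Ultrafilter ι} {u : ι → X} {s : Set X} (hs : IsCompact s)
    (hu : ∀ᶠ i in (U : Filter ι), u i ∈ s) : ∃ t ∈ s, Tendsto u U (𝓝 t) :=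
  hs.ultrafilter_le_nhds' (U.map u) hu

/-! ### Invariant measures from backward orbits -/

section

variable {X : Type*} [MeasurableSpace X] {S T : X → X} {x : X}

/-- The uniform distribution on the first `N + 1` points of the orbit of `x` under `T`. -/
noncomputable def empiricalMeasure (T : X → X) (x : X) (N : ℕ) : Measure X :=
  ((N + 1 : ℕ) : ℝ≥0∞)⁻¹ • ∑ n ∈ Finset.range (N + 1), Measure.dirac (T^[n] x)

instance (T : X → X) (x : X) (N : ℕ) : IsProbabilityMeasure (empiricalMeasure T x N) where
  measure_univ := by
    simp only [empiricalMeasure, Measure.smul_apply, Measure.finsetSum_apply, measure_univ,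
      Finset.sum_const, Finset.card_range, smul_eq_mul, nsmul_eq_mul, mul_one]
    exact ENNReal.inv_mul_cancel (by simp) (ENNReal.natCast_ne_top _)

theorem integral_empiricalMeasure (T : X → X) (x : X) (N : ℕ) {g : X → ℝ}
    (hg : StronglyMeasurable g) :
    ∫ y, g y ∂empiricalMeasure T x N = birkhoffAverage ℝ T g (N + 1) x := by
  rw [empiricalMeasure, integral_smul_measure,
    integral_finsetSum_measure fun n _ => integrable_dirac' hg enorm_lt_top]
  simp only [integral_dirac' _ _ hg, ENNReal.toReal_inv, ENNReal.toReal_natCast]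
  rfl

theorem empiricalMeasure_eq_zero {s : Set X} (hs : MeasurableSet s) (h : ∀ n, T^[n] x ∉ s)
    (N : ℕ) : empiricalMeasure T x N s = 0 := by
  rw [empiricalMeasure, Measure.smul_apply, Measure.finsetSum_apply,
    Finset.sum_eq_zero fun n _ => by rw [Measure.dirac_apply' _ hs, Set.indicator_of_notMem (h n)],
    smul_zero]

variable [TopologicalSpace X] [BorelSpace X]

theorem exists_tendsto_birkhoffAverage [T2Space X] {K : Set X} (hK : IsCompact K)
    (hx : ∀ n, T^[n] x ∈ K) (U : Ultrafilter ℕ) :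
    ∃ μ : Measure X, IsProbabilityMeasure μ ∧ ∀ g : BoundedContinuousFunction X ℝ,
      Tendsto (fun N => birkhoffAverage ℝ T g (N + 1) x) U (𝓝 (∫ y, g y ∂μ)) := by
  let m (N : ℕ) : ProbabilityMeasure X := ⟨empiricalMeasure T x N, inferInstance⟩
  have htight : IsTightMeasureSet {((μ : ProbabilityMeasure X) : Measure X) | μ ∈ Set.range m} := by
    refine isTightMeasureSet_iff_exists_isCompact_measure_compl_le.2 fun ε _ => ⟨K, hK, ?_⟩
    rintro _ ⟨_, ⟨N, rfl⟩, rfl⟩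
    exact (empiricalMeasure_eq_zero hK.measurableSet.compl (fun n hn => hn (hx n)) N).trans_le
      zero_le
  obtain ⟨μ, -, hμ⟩ := (isCompact_closure_of_isTightMeasureSet htight).ultrafilter_le_nhds'
    (U.map m) (mem_of_superset range_mem_map subset_closure)
  have hm : Tendsto m U (𝓝 μ) := hμ
  exact ⟨μ, inferInstance, fun g =>
    (ProbabilityMeasure.tendsto_iff_forall_integral_tendsto.1 hm g).congr fun N =>
      integral_empiricalMeasure T x N g.continuous.stronglyMeasurable⟩

theorem measurePreserving_of_tendsto_birkhoffAverage [HasOuterApproxClosed X]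
    (hS : Continuous S) (hST : Function.LeftInverse S T) {μ : Measure X} [IsFiniteMeasure μ]
    {l : Filter ℕ} [l.NeBot] (hl : l ≤ atTop)
    (hμ : ∀ g : BoundedContinuousFunction X ℝ,
      Tendsto (fun N => birkhoffAverage ℝ T g (N + 1) (T x)) l (𝓝 (∫ y, g y ∂μ))) :
    MeasurePreserving S μ μ := by
  refine ⟨hS.measurable, ext_of_forall_integral_eq_of_IsFiniteMeasure fun g => ?_⟩
  rw [integral_map hS.aemeasurable g.continuous.aestronglyMeasurable]
  have average_comp (N : ℕ) :
      birkhoffAverage ℝ T (fun y => g (S y)) (N + 1) (T x) = birkhoffAverage ℝ T g (N + 1) x := by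
    simp only [birkhoffAverage, birkhoffSum, ← Function.iterate_succ_apply,
      Function.iterate_succ_apply' T, hST _]
  have average_sub : Tendsto (fun N => birkhoffAverage ℝ T g (N + 1) (T x) -
      birkhoffAverage ℝ T (fun y => g (S y)) (N + 1) (T x)) l (𝓝 0) := by
    simp only [average_comp]
    exact ((tendsto_birkhoffAverage_apply_sub_birkhoffAverage' ℝ g.isBounded_range T x).comp
      (tendsto_add_atTop_nat 1)).mono_left hl
  exact (sub_eq_zero.1 <| tendsto_nhds_unique
    ((hμ g).sub (hμ (g.compContinuous ⟨S, hS⟩))) average_sub).symm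

/-- The Krylov–Bogoliubov construction along the backward orbit of `x` given by the right inverse
`T` of `S`. -/
theorem exists_measurePreserving_le_integral [T2Space X] [HasOuterApproxClosed X]
    (hS : Continuous S) (hST : Function.LeftInverse S T) {K : Set X} (hK : IsCompact K)
    (hx : ∀ n, T^[n + 1] x ∈ K) :
    ∃ μ : Measure X, IsProbabilityMeasure μ ∧ MeasurePreserving S μ μ ∧
      ∀ (g : BoundedContinuousFunction X ℝ) (c : ℝ), (∀ n, c ≤ g (T^[n + 1] x)) →
        c ≤ ∫ y, g y ∂μ := by
  obtain ⟨μ, hμ, average_tendsto⟩ :=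
    exists_tendsto_birkhoffAverage (x := T x) hK hx (Ultrafilter.of atTop)
  refine ⟨μ, hμ, measurePreserving_of_tendsto_birkhoffAverage hS hST
    (Ultrafilter.of_le atTop) average_tendsto, fun g c hc => ?_⟩
  refine ge_of_tendsto' (average_tendsto g) fun N => ?_
  rw [birkhoffAverage, smul_eq_mul, le_inv_mul_iff₀ (by positivity), ← nsmul_eq_mul]
  exact (congrArg (· • c) (Finset.card_range (N + 1))).symm.trans_le <|
    Finset.card_nsmul_le_sum _ _ _ fun n _ => hc n

end

namespace MarkovShift

/-! ### Cylinders -/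

section

variable {A : ℕ → ℕ → Bool} {f u : MarkovShift A → ℝ} {x y z : MarkovShift A} {n k : ℕ}

theorem ext_apply (h : ∀ i, x.1 i = y.1 i) : x = y :=
  Subtype.ext (funext h)

theorem iterate_shift_apply (x : MarkovShift A) (n i : ℕ) :
    (shift^[n] x).1 i = x.1 (i + n) := by
  induction n generalizing x with
  | zero => rfl
  | succ n ih =>
    rw [Function.iterate_succ_apply, ih]
    exact congrArg x.1 (by omega)

theorem iterate_shift_apply_zero (x : MarkovShift A) (n : ℕ) : (shift^[n] x).1 0 = x.1 n := by
  rw [iterate_shift_apply, zero_add]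

theorem continuous_apply_coord (i : ℕ) : Continuous fun x : MarkovShift A => x.1 i :=
  (continuous_apply i).comp continuous_subtype_val

theorem continuous_shift : Continuous (shift : MarkovShift A → MarkovShift A) :=
  (continuous_pi fun i => continuous_apply_coord (i + 1)).subtype_mk _

theorem self_mem_cylOf (x : MarkovShift A) (n : ℕ) : x ∈ cylOf x n :=
  fun _ _ => rfl

theorem mem_cylOf_symm (h : x ∈ cylOf y n) : y ∈ cylOf x n :=
  fun i hi => (h i hi).symm

theorem mem_cylOf_trans (hxy : x ∈ cylOf y n) (hyz : y ∈ cylOf z n) : x ∈ cylOf z n :=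
  fun i hi => (hxy i hi).trans (hyz i hi)

theorem cylOf_anti (x : MarkovShift A) {m n : ℕ} (h : m ≤ n) : cylOf x n ⊆ cylOf x m :=
  fun _ hy i hi => hy i (hi.trans_le h)

theorem mem_cylOf_one : x ∈ cylOf y 1 ↔ x.1 0 = y.1 0 := by
  simp [cylOf]

theorem shift_mem_cylOf (h : x ∈ cylOf y (k + 1)) : shift x ∈ cylOf (shift y) k :=
  fun i hi => h (i + 1) (by omega)

theorem iterate_shift_mem_cylOf (h : x ∈ cylOf y (n + k)) :
    shift^[n] x ∈ cylOf (shift^[n] y) k := fun i hi => by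
  rw [iterate_shift_apply, iterate_shift_apply]
  exact h _ (by omega)

theorem isOpen_cylOf (x : MarkovShift A) (n : ℕ) : IsOpen (cylOf x n) :=
  (PiNat.isOpen_cylinder (fun _ => ℕ) x.1 n).preimage continuous_subtype_val

theorem cylOf_mem_nhds (x : MarkovShift A) (n : ℕ) : cylOf x n ∈ 𝓝 x :=
  (isOpen_cylOf x n).mem_nhds (self_mem_cylOf x n)

theorem exists_cylOf_subset {U : Set (MarkovShift A)} (hU : U ∈ 𝓝 x) : ∃ n, cylOf x n ⊆ U := by
  obtain ⟨T, hT, hTU⟩ := (mem_nhds_induced Subtype.val x U).1 hU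
  obtain ⟨_, ⟨z, n, rfl⟩, hxz, hzT⟩ :=
    (PiNat.isTopologicalBasis_cylinders fun _ => ℕ).mem_nhds_iff.1 hT
  exact ⟨n, fun y hy => hTU (hzT fun i hi => (hy i hi).trans (hxz i hi))⟩

/-! ### Variations -/

/-- `ω k` bounds the variation `Var_k u` for every `k ≥ N`. -/
def VariationBound (N : ℕ) (ω : ℕ → ℝ) (u : MarkovShift A → ℝ) : Prop :=
  ∀ k, N ≤ k → ∀ x y, x ∈ cylOf y k → |u x - u y| ≤ ω k

theorem VariationBound.continuous {N : ℕ} {ω : ℕ → ℝ} (hu : VariationBound N ω u)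
    (hω : Tendsto ω atTop (𝓝 0)) : Continuous u := by
  refine continuous_iff_continuousAt.2 fun x => Metric.tendsto_nhds.2 fun ε hε => ?_
  obtain ⟨k, hkε, hNk⟩ := ((hω.eventually_lt_const hε).and (eventually_ge_atTop N)).exists
  filter_upwards [cylOf_mem_nhds x k] with y hy
  exact (hu k hNk y x hy).trans_lt hkε

theorem continuous_of_forall_mem_cylOf (n : ℕ) (hu : ∀ x y, x ∈ cylOf y n → u x = u y) :
    Continuous u := by
  refine VariationBound.continuous (N := n) (ω := 0) (fun k hk x y hxy => ?_) tendsto_const_nhds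
  rw [hu x y (cylOf_anti y hk hxy), sub_self, abs_zero, Pi.zero_apply]

theorem VariationBound.of_tendsto {ι : Type*} {l : Filter ι} [l.NeBot] {N : ℕ} {ω : ℕ → ℝ}
    {v : ι → MarkovShift A → ℝ} (hv : ∀ᶠ i in l, VariationBound N ω (v i))
    (hu : ∀ x, Tendsto (fun i => v i x) l (𝓝 (u x))) : VariationBound N ω u :=
  fun k hk x y hxy => le_of_tendsto ((hu x).sub (hu y)).abs (hv.mono fun _ hi => hi k hk x y hxy)

theorem VariationBound.sub_const {N : ℕ} {ω : ℕ → ℝ} (hu : VariationBound N ω u) (c : ℝ) :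
    VariationBound N ω fun x => u x - c := fun k hk x y hxy => by
  simpa only [sub_sub_sub_cancel_right] using hu k hk x y hxy

theorem tendstoUniformlyOn_of_variationBound {ι : Type*} {l : Filter ι} {N : ℕ}
    {ω : ℕ → ℝ} {v : ι → MarkovShift A → ℝ} (hω : Tendsto ω atTop (𝓝 0))
    (hv : ∀ᶠ i in l, VariationBound N ω (v i)) (hu : VariationBound N ω u)
    (hvu : ∀ x, Tendsto (fun i => v i x) l (𝓝 (u x))) {K : Set (MarkovShift A)}
    (hK : IsCompact K) : TendstoUniformlyOn v u l K := by
  refine (tendstoLocallyUniformlyOn_iff_tendstoUniformlyOn_of_compact hK).1 <|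
    Metric.tendstoLocallyUniformlyOn_iff.2 fun ε hε x _ => ?_
  have hε3 : 0 < ε / 3 := by positivity
  obtain ⟨k, hkε, hNk⟩ := ((hω.eventually_lt_const hε3).and (eventually_ge_atTop N)).exists
  refine ⟨cylOf x k, mem_nhdsWithin_of_mem_nhds (cylOf_mem_nhds x k), ?_⟩
  filter_upwards [hv, Metric.tendsto_nhds.1 (hvu x) _ hε3] with i hvi hix y hy
  calc dist (u y) (v i y) ≤ dist (u y) (u x) + dist (u x) (v i x) + dist (v i x) (v i y) :=
        dist_triangle4 _ _ _ _
    _ < ε / 3 + ε / 3 + ε / 3 := by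
        gcongr
        · exact (hu k hNk y x hy).trans_lt hkε
        · rwa [dist_comm]
        · exact (hvi k hNk x y (mem_cylOf_symm hy)).trans_lt hkε
    _ = ε := by ring

/-! ### Birkhoff sums and the Walters condition -/

@[simp]
theorem birkhoff_one (f : MarkovShift A → ℝ) (x : MarkovShift A) : birkhoff f 1 x = f x := by
  simp [birkhoff]

theorem birkhoff_succ (f : MarkovShift A → ℝ) (n : ℕ) (x : MarkovShift A) :
    birkhoff f (n + 1) x = f x + birkhoff f n (shift x) := by
  simp only [birkhoff, Finset.sum_range_succ', Function.iterate_succ_apply,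
    Function.iterate_zero_apply]
  ring

theorem birkhoff_const_mul (β : ℝ) (f : MarkovShift A → ℝ) (n : ℕ) (x : MarkovShift A) :
    birkhoff (fun x => β * f x) n x = β * birkhoff f n x :=
  (Finset.mul_sum _ _ _).symm

theorem waltersSup_nonneg (f : MarkovShift A → ℝ) (k : ℕ) : 0 ≤ waltersSup f k :=
  Real.sSup_nonneg <| by
    rintro _ ⟨_, _, _, _, _, rfl⟩
    exact abs_nonneg _

theorem SatisfiesWalters.abs_birkhoff_sub_le (hf : SatisfiesWalters f) (hk : 1 ≤ k) (hn : 1 ≤ n)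
    (hxy : x ∈ cylOf y (n + k)) : |birkhoff f n x - birkhoff f n y| ≤ waltersSup f k :=
  le_csSup (hf.1 k hk) ⟨n, hn, x, y, hxy, rfl⟩

theorem SatisfiesWalters.abs_birkhoff_sub_le_varBirk (hf : SatisfiesWalters f) (hk : 1 ≤ k)
    (hn : 1 ≤ n) (hxy : x ∈ cylOf y (n + k)) :
    |birkhoff f n x - birkhoff f n y| ≤ varBirk f n (n + k) := by
  have hsub : varSet f n (n + k) ⊆ waltersSet f k := fun c hc => ⟨n, hn, hc⟩
  exact le_csSup ((hf.1 k hk).mono hsub) ⟨x, y, hxy, rfl⟩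

theorem SatisfiesWalters.abs_sub_le (hf : SatisfiesWalters f) (hk : 1 ≤ k)
    (hxy : x ∈ cylOf y (k + 1)) : |f x - f y| ≤ waltersSup f k := by
  simpa only [birkhoff_one] using
    hf.abs_birkhoff_sub_le hk le_rfl (cylOf_anti y (add_comm 1 k).le hxy)

theorem SatisfiesWalters.variationBound (hf : SatisfiesWalters f) :
    VariationBound 2 (fun k => waltersSup f (k - 1)) f := fun k hk _ y hxy =>
  hf.abs_sub_le (by omega) (cylOf_anti y (by omega) hxy)

theorem SatisfiesWalters.continuous (hf : SatisfiesWalters f) : Continuous f :=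
  hf.variationBound.continuous (hf.2.comp (tendsto_sub_atTop_nat 1))

theorem Var1Finite.exists_abs_sub_le (hf : Var1Finite f) :
    ∃ C, ∀ x y : MarkovShift A, x.1 0 = y.1 0 → |f x - f y| ≤ C := by
  obtain ⟨C, hC⟩ := hf
  exact ⟨C, fun x y h => hC ⟨x, y, mem_cylOf_one.2 h, by simp only [birkhoff_one]⟩⟩

theorem Var1Finite.exists_abs_le (hf : Var1Finite f) (F : Finset ℕ) :
    ∃ B, 0 ≤ B ∧ ∀ x : MarkovShift A, x.1 0 ∈ F → |f x| ≤ B := by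
  obtain ⟨C, hC⟩ := hf.exists_abs_sub_le
  have bound_symbol (a : ℕ) : ∃ B, ∀ x : MarkovShift A, x.1 0 = a → |f x| ≤ B := by
    by_cases ha : Admissible A a
    · obtain ⟨y, rfl⟩ := ha
      refine ⟨|f y| + C, fun x hx => ?_⟩
      linarith [abs_sub_abs_le_abs_sub (f x) (f y), hC x y hx]
    · exact ⟨0, fun x hx => absurd ⟨x, hx⟩ ha⟩
  choose B hB using bound_symbol
  refine ⟨∑ a ∈ F, |B a|, by positivity, fun x hx => ?_⟩
  calc |f x| ≤ |B (x.1 0)| := (hB _ x rfl).trans (le_abs_self _)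
    _ ≤ ∑ a ∈ F, |B a| := Finset.single_le_sum (fun a _ => abs_nonneg (B a)) hx

/-! ### Constructing points -/

/-- The point `a x₀ x₁ x₂ …`, the preimage of `x` under the shift starting with `a`. -/
def cons (a : ℕ) (x : MarkovShift A) (h : A a (x.1 0) = true) : MarkovShift A :=
  ⟨fun i => Nat.casesOn i a x.1, fun
    | 0 => h
    | i + 1 => x.2 i⟩

@[simp]
theorem shift_cons (a : ℕ) (x : MarkovShift A) (h : A a (x.1 0) = true) :
    shift (cons a x h) = x := rfl

theorem cons_shift (z : MarkovShift A) : cons (z.1 0) (shift z) (z.2 0) = z :=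
  ext_apply fun
    | 0 => rfl
    | _ + 1 => rfl

theorem cons_mem_cylOf {a : ℕ} {hx : A a (x.1 0) = true} {hy : A a (y.1 0) = true}
    (h : x ∈ cylOf y k) : cons a x hx ∈ cylOf (cons a y hy) (k + 1) := fun
  | 0, _ => rfl
  | i + 1, hi => h i (by omega)

theorem exists_mem_cylOf_iterate_shift_eq (h : z.1 0 = x.1 n) :
    ∃ w ∈ cylOf x (n + 1), shift^[n] w = z := by
  induction n generalizing x with
  | zero => exact ⟨z, mem_cylOf_one.2 h, rfl⟩
  | succ n ih =>
    obtain ⟨w, hw, hwz⟩ := ih (x := shift x) h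
    have hA : A (x.1 0) (w.1 0) = true := by
      rw [hw 0 (by omega)]
      exact x.2 0
    refine ⟨cons (x.1 0) w hA, ?_, by rwa [Function.iterate_succ_apply, shift_cons]⟩
    simpa only [cons_shift] using cons_mem_cylOf (hx := hA) (hy := x.2 0) hw

theorem exists_iterate_shift_eq_of_isChain (w : List ℕ) (a : ℕ) (y : MarkovShift A)
    (hw : List.IsChain (fun u v => A u v = true) (a :: (w ++ [y.1 0]))) :
    ∃ z : MarkovShift A, z.1 0 = a ∧ shift^[w.length + 1] z = y ∧
      ∀ i, 1 ≤ i → i ≤ w.length → z.1 i ∈ w := by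
  induction w generalizing a with
  | nil => exact ⟨cons a y (by simpa using hw), rfl, rfl, by simp; omega⟩
  | cons c w ih =>
    rw [List.cons_append, List.isChain_cons_cons] at hw
    obtain ⟨z, rfl, hzy, hzw⟩ := ih c hw.2
    refine ⟨cons a z hw.1, rfl, hzy, fun
      | 1, _, _ => List.mem_cons_self
      | i + 2, _, hi => List.mem_cons_of_mem _ (hzw (i + 1) (by omega) (by simpa using hi))⟩

/-- Every admissible symbol can be joined to every point by a word of length `K` over `F`. -/
def IsBridging (A : ℕ → ℕ → Bool) (K : ℕ) (F : Finset ℕ) : Prop :=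
  ∀ a, Admissible A a → ∀ y : MarkovShift A, ∃ z : MarkovShift A,
    z.1 0 = a ∧ shift^[K + 1] z = y ∧ ∀ i, 1 ≤ i → i ≤ K → z.1 i ∈ F

theorem FinitelyPrimitive.exists_isBridging (hA : FinitelyPrimitive A) :
    ∃ K F, IsBridging A K F := by
  obtain ⟨K, F, h⟩ := hA
  refine ⟨K, F, fun a ha y => ?_⟩
  obtain ⟨w, rfl, hwF, hw⟩ := h a (y.1 0) ha ⟨y, rfl⟩
  obtain ⟨z, hz0, hzy, hzw⟩ := exists_iterate_shift_eq_of_isChain w a y hw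
  exact ⟨z, hz0, hzy, fun i hi hiK => hwF _ (hzw i hi hiK)⟩

theorem exists_periodic_mem_cylOf (hn : 0 < n) (hz : z.1 n = z.1 0) :
    ∃ p ∈ cylOf z n, shift^[n] p = p := by
  have succ_mod (i : ℕ) : z.1 ((i + 1) % n) = z.1 (i % n + 1) := by
    rw [← Nat.mod_add_mod]
    obtain h | h : i % n + 1 < n ∨ i % n + 1 = n :=
      Nat.lt_or_eq_of_le (Nat.mod_lt i hn)
    · rw [Nat.mod_eq_of_lt h]
    · rw [h, Nat.mod_self, hz]
  let p : MarkovShift A :=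
    ⟨fun i => z.1 (i % n), fun i => by simpa only [succ_mod] using z.2 (i % n)⟩
  refine ⟨p, fun i hi => congrArg z.1 (Nat.mod_eq_of_lt hi), ext_apply fun i => ?_⟩
  exact (iterate_shift_apply p n i).trans (congrArg z.1 (Nat.add_mod_right i n))

end

/-! ### Summable potentials -/

section

variable {A : ℕ → ℕ → Bool} {f g : MarkovShift A → ℝ} {c : ℕ → ℝ}

/-- The potential `g` is summable: `exp g` is bounded by the summable weight `c` of the first
symbol. -/
structure DominatedBy (g : MarkovShift A → ℝ) (c : ℕ → ℝ) : Prop where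
  nonneg : ∀ a, 0 ≤ c a
  summable : Summable c
  exp_le : ∀ x, Real.exp (g x) ≤ c (x.1 0)

namespace DominatedBy

theorem le_tsum (hg : DominatedBy g c) (x : MarkovShift A) : g x ≤ ∑' a, c a :=
  calc g x ≤ Real.exp (g x) := by linarith [Real.add_one_le_exp (g x)]
    _ ≤ c (x.1 0) := hg.exp_le x
    _ ≤ ∑' a, c a := hg.summable.le_tsum _ fun a _ => hg.nonneg a

theorem const_mul (hg : DominatedBy g c) {β : ℝ} (hβ : 1 ≤ β) :
    DominatedBy (fun x => β * g x) fun a => Real.exp ((β - 1) * ∑' b, c b) * c a where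
  nonneg a := mul_nonneg (Real.exp_pos _).le (hg.nonneg a)
  summable := hg.summable.mul_left _
  exp_le x := by
    have hx := mul_le_mul_of_nonneg_left (hg.le_tsum x) (sub_nonneg.2 hβ)
    calc Real.exp (β * g x) = Real.exp ((β - 1) * g x) * Real.exp (g x) := by
          rw [← Real.exp_add]
          ring_nf
      _ ≤ Real.exp ((β - 1) * ∑' b, c b) * c (x.1 0) :=
          mul_le_mul (Real.exp_le_exp.2 hx) (hg.exp_le x) (Real.exp_pos _).le (Real.exp_pos _).le

theorem finite_setOf_le (hg : DominatedBy g c) (t : ℝ) :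
    {a | ∃ x : MarkovShift A, x.1 0 = a ∧ t ≤ g x}.Finite := by
  have hlt : ∀ᶠ a in cofinite, c a < Real.exp t :=
    hg.summable.tendsto_cofinite_zero.eventually_lt_const (Real.exp_pos t)
  refine (eventually_cofinite.1 hlt).subset ?_
  rintro _ ⟨x, rfl, hx⟩
  exact not_lt.2 ((Real.exp_le_exp.2 hx).trans (hg.exp_le x))

end DominatedBy

theorem IsBridging.exists_periodic {K : ℕ} {F : Finset ℕ} (hF : IsBridging A K F) {a b : ℕ}
    (ha : Admissible A a) (hb : Admissible A b) :
    ∃ q : MarkovShift A, shift^[2 * K + 2] q = q ∧ q.1 0 = b ∧ q.1 (K + 1) = a ∧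
      ∀ j < 2 * K + 2, j ≠ K + 1 → q.1 j ∈ insert b F := by
  have ⟨x, hx⟩ := hb
  obtain ⟨z, hza, hzx, hzF⟩ := hF a ha x
  obtain ⟨w, hwb, hwz, hwF⟩ := hF b hb z
  have hw (i : ℕ) : w.1 (i + (K + 1)) = z.1 i := by rw [← hwz, iterate_shift_apply]
  have hwa : w.1 (K + 1) = a := by rw [← hza, ← hw, zero_add]
  have hw_period : w.1 (2 * K + 2) = w.1 0 := by
    rw [show 2 * K + 2 = K + 1 + (K + 1) by ring, hw, hwb, ← hx, ← hzx, iterate_shift_apply_zero]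
  obtain ⟨q, hq, hqq⟩ := exists_periodic_mem_cylOf (by omega) hw_period
  refine ⟨q, hqq, (hq 0 (by omega)).trans hwb, (hq _ (by omega)).trans hwa, fun j hj hjK => ?_⟩
  rw [hq j hj, Finset.mem_insert]
  rcases Nat.eq_zero_or_pos j with rfl | hj0
  · exact Or.inl hwb
  rcases le_or_gt j K with hjK' | hjK'
  · exact Or.inr (hwF j hj0 hjK')
  · obtain ⟨i, rfl⟩ : ∃ i, j = i + (K + 1) := ⟨j - (K + 1), by omega⟩
    rw [hw]
    exact Or.inr (hzF i (by omega) (by omega))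

theorem sub_mul_le_birkhoff {B : ℝ} (hB : 0 ≤ B) {n m : ℕ} (hm : m < n) {q : MarkovShift A}
    (hq : ∀ j < n, j ≠ m → -B ≤ f (shift^[j] q)) :
    f (shift^[m] q) - n * B ≤ birkhoff f n q := by
  have hrest : 0 ≤ ∑ j ∈ (Finset.range n).erase m, (f (shift^[j] q) + B) :=
    Finset.sum_nonneg fun j hj => by
      linarith [hq j (Finset.mem_range.1 (Finset.mem_of_mem_erase hj)) (Finset.ne_of_mem_erase hj)]
  have hsplit := Finset.add_sum_erase _ (fun j => f (shift^[j] q) + B) (Finset.mem_range.2 hm)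
  have hsum : ∑ j ∈ Finset.range n, (f (shift^[j] q) + B) = birkhoff f n q + n * B := by
    rw [Finset.sum_add_distrib, Finset.sum_const, Finset.card_range, nsmul_eq_mul, birkhoff]
  linarith

/-- Every admissible symbol is visited by a periodic orbit of fixed period through a fixed symbol
whose other symbols lie in a finite set, so `exp f` is controlled by a finite partition sum. -/
theorem exists_dominatedBy (hA : FinitelyPrimitive A) (hf : Var1Finite f) {p : ℝ}
    (hp : HasGurevichPressure f p) : ∃ c, DominatedBy f c := by
  rcases isEmpty_or_nonempty (MarkovShift A) with _ | ⟨⟨x₀⟩⟩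
  · exact ⟨0, fun _ => le_rfl, summable_zero, isEmptyElim⟩
  obtain ⟨K, F, hF⟩ := hA.exists_isBridging
  obtain ⟨C, hC⟩ := hf.exists_abs_sub_le
  obtain ⟨B, hB0, hB⟩ := hf.exists_abs_le (insert (x₀.1 0) F)
  choose q hq_periodic hq0 hqa hqF using fun a : {a // Admissible A a} =>
    hF.exists_periodic a.2 ⟨x₀, rfl⟩
  have hKn : K + 1 < 2 * K + 2 := by omega
  generalize 2 * K + 2 = n at *
  have hle (a : {a // Admissible A a}) (x : MarkovShift A) (hx : x.1 0 = a) :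
      f x ≤ (C + n * B) + birkhoff f n (q a) := by
    have hxq := (abs_le.1 (hC x (shift^[K + 1] (q a))
      (by rw [iterate_shift_apply_zero, hqa, hx]))).2
    have hSq := sub_mul_le_birkhoff hB0 hKn fun j hj hjK =>
      (abs_le.1 (hB (shift^[j] (q a)) (by
        rw [iterate_shift_apply_zero]
        exact hqF a j hj hjK))).1
    linarith
  let c : {a // Admissible A a} → ℝ := fun a =>
    Real.exp (C + n * B + birkhoff f n (q a))
  have hc : Summable c := by
    let orbit (a : {a // Admissible A a}) : {x // shift^[n] x = x ∧ x.1 0 = x₀.1 0} :=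
      ⟨q a, hq_periodic a, hq0 a⟩
    have horbit : Function.Injective orbit := fun a a' h => Subtype.ext <| by
      have hqq : q a = q a' := congrArg Subtype.val h
      rw [← hqa a, ← hqa a', hqq]
    have hsum := (((hp _ ⟨x₀, rfl⟩).1 n (by omega)).comp_injective horbit).mul_left
      (Real.exp (C + n * B))
    exact hsum.congr fun a => (Real.exp_add _ _).symm
  have hc0 : 0 ≤ c := fun a => (Real.exp_pos _).le
  refine ⟨Function.extend Subtype.val c 0, fun a => Function.extend_nonneg hc0 le_rfl a,
    (summable_extend_zero Subtype.val_injective).2 hc, fun x => ?_⟩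
  rw [Subtype.val_injective.extend_apply c 0 ⟨x.1 0, x, rfl⟩]
  exact Real.exp_le_exp.2 (hle ⟨x.1 0, x, rfl⟩ x rfl)

end

/-! ### The transfer operator -/

section

variable {A : ℕ → ℕ → Bool} {g u v : MarkovShift A → ℝ} {c : ℕ → ℝ} {x y : MarkovShift A}

/-- The contribution to `ruelle g u x` of the preimage of `x` starting with the symbol `a`, and
`0` if there is none. Indexing the sum by symbols makes different fibres comparable. -/
noncomputable def ruelleTerm (g u : MarkovShift A → ℝ) (x : MarkovShift A) (a : ℕ) : ℝ :=
  if h : A a (x.1 0) = true then Real.exp (g (cons a x h)) * u (cons a x h) else 0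

theorem ruelleTerm_shift (g u : MarkovShift A → ℝ) (z : MarkovShift A) :
    ruelleTerm g u (shift z) (z.1 0) = Real.exp (g z) * u z :=
  (dif_pos (z.2 0)).trans (by rw [cons_shift])

theorem ruelleTerm_nonneg (hu : ∀ x, 0 ≤ u x) (x : MarkovShift A) (a : ℕ) :
    0 ≤ ruelleTerm g u x a := by
  rw [ruelleTerm]
  split_ifs
  · exact mul_nonneg (Real.exp_pos _).le (hu _)
  · exact le_rfl

theorem ruelleTerm_mono (huv : ∀ x, u x ≤ v x) (x : MarkovShift A) (a : ℕ) :
    ruelleTerm g u x a ≤ ruelleTerm g v x a := by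
  simp only [ruelleTerm]
  split_ifs
  · exact mul_le_mul_of_nonneg_left (huv _) (Real.exp_pos _).le
  · exact le_rfl

theorem ruelleTerm_const_mul (r : ℝ) (a : ℕ) :
    ruelleTerm g (fun x => r * u x) x a = r * ruelleTerm g u x a := by
  simp only [ruelleTerm]
  split_ifs
  · ring
  · rw [mul_zero]

theorem head_injOn_fiber (x : MarkovShift A) :
    Set.InjOn (fun z : MarkovShift A => z.1 0) {z | shift z = x} := by
  rintro z rfl w hw hzw
  refine ext_apply fun
    | 0 => hzw
    | i + 1 => (congrArg (fun t : MarkovShift A => t.1 i) hw).symm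

theorem ruelle_eq_tsum (g u : MarkovShift A → ℝ) (x : MarkovShift A) :
    ruelle g u x = ∑' a, ruelleTerm g u x a := by
  have hsupp : Function.support (ruelleTerm g u x) ⊆
      Set.range fun y : {y : MarkovShift A // shift y = x} => y.1.1 0 := fun a ha => by
    have hax : A a (x.1 0) = true := by
      by_contra h
      exact ha (dif_neg h)
    exact ⟨⟨cons a x hax, rfl⟩, rfl⟩
  rw [ruelle, ← (Set.injOn_iff_injective.1 (head_injOn_fiber x)).tsum_eq hsupp]
  refine tsum_congr ?_
  rintro ⟨y, rfl⟩
  exact (ruelleTerm_shift g u y).symm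

theorem ruelle_const_mul (r : ℝ) : ruelle g (fun x => r * u x) x = r * ruelle g u x := by
  simp only [ruelle_eq_tsum, ruelleTerm_const_mul, tsum_mul_left]

/-- `u` is nonnegative and all series defining the iterates `L_g^n u` converge. -/
structure RuelleSummable (g u : MarkovShift A → ℝ) : Prop where
  nonneg : ∀ x, 0 ≤ u x
  summable_iterate : ∀ n x, Summable (ruelleTerm g ((ruelle g)^[n] u) x)

namespace RuelleSummable

theorem summable (hu : RuelleSummable g u) (x : MarkovShift A) : Summable (ruelleTerm g u x) :=
  hu.summable_iterate 0 x

theorem ruelle (hu : RuelleSummable g u) : RuelleSummable g (ruelle g u) where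
  nonneg x := by
    rw [ruelle_eq_tsum]
    exact tsum_nonneg (ruelleTerm_nonneg hu.nonneg x)
  summable_iterate n := hu.summable_iterate (n + 1)

theorem iterate_ruelle_mono (hu : RuelleSummable g u) (hv : RuelleSummable g v)
    (huv : ∀ x, u x ≤ v x) (n : ℕ) (x : MarkovShift A) :
    (MarkovShift.ruelle g)^[n] u x ≤ (MarkovShift.ruelle g)^[n] v x := by
  induction n generalizing u v with
  | zero => exact huv x
  | succ _ ih =>
    refine ih hu.ruelle hv.ruelle fun y => ?_
    rw [ruelle_eq_tsum, ruelle_eq_tsum]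
    exact (hu.summable y).tsum_le_tsum (ruelleTerm_mono huv y) (hv.summable y)

theorem sum_le_ruelle (hu : RuelleSummable g u) {S : Finset (MarkovShift A)}
    (hS : ∀ z ∈ S, shift z = y) :
    ∑ z ∈ S, Real.exp (g z) * u z ≤ MarkovShift.ruelle g u y :=
  calc ∑ z ∈ S, Real.exp (g z) * u z
      = ∑ z ∈ S, ruelleTerm g u y (z.1 0) := Finset.sum_congr rfl fun z hz => by
        rw [← hS z hz, ruelleTerm_shift]
    _ = ∑ a ∈ S.image fun z => z.1 0, ruelleTerm g u y a :=
        (Finset.sum_image ((head_injOn_fiber y).mono hS)).symm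
    _ ≤ ∑' a, ruelleTerm g u y a :=
        (hu.summable y).sum_le_tsum _ fun a _ => ruelleTerm_nonneg hu.nonneg y a
    _ = MarkovShift.ruelle g u y := (ruelle_eq_tsum g u y).symm

theorem sum_le_iterate_ruelle (hu : RuelleSummable g u) {n : ℕ} {S : Finset (MarkovShift A)}
    (hS : ∀ z ∈ S, shift^[n] z = y) :
    ∑ z ∈ S, Real.exp (birkhoff g n z) * u z ≤ (MarkovShift.ruelle g)^[n] u y := by
  classical
  induction n generalizing u S with
  | zero =>
    calc ∑ z ∈ S, Real.exp (birkhoff g 0 z) * u z = ∑ z ∈ S, u z := by simp [birkhoff]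
      _ ≤ ∑ z ∈ {y}, u z := Finset.sum_le_sum_of_subset_of_nonneg
          (fun z hz => Finset.mem_singleton.2 (hS z hz)) fun z _ _ => hu.nonneg z
      _ = u y := Finset.sum_singleton u y
  | succ n ih =>
    have himage : ∀ w ∈ S.image shift, shift^[n] w = y := by
      simpa only [Finset.forall_mem_image, ← Function.iterate_succ_apply] using hS
    refine le_trans ?_ (ih hu.ruelle himage)
    rw [← Finset.sum_fiberwise_of_maps_to fun z hz => Finset.mem_image_of_mem shift hz]
    refine Finset.sum_le_sum fun w _ => ?_
    calc ∑ z ∈ S with shift z = w, Real.exp (birkhoff g (n + 1) z) * u z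
        = Real.exp (birkhoff g n w) * ∑ z ∈ S with shift z = w, Real.exp (g z) * u z := by
          rw [Finset.mul_sum]
          refine Finset.sum_congr rfl fun z hz => ?_
          rw [birkhoff_succ, (Finset.mem_filter.1 hz).2, Real.exp_add]
          ring
      _ ≤ Real.exp (birkhoff g n w) * MarkovShift.ruelle g u w :=
          mul_le_mul_of_nonneg_left (hu.sum_le_ruelle fun z hz => (Finset.mem_filter.1 hz).2)
            (Real.exp_pos _).le

theorem exp_birkhoff_mul_le (hu : RuelleSummable g u) (n : ℕ) (z : MarkovShift A) :
    Real.exp (birkhoff g n z) * u z ≤ (MarkovShift.ruelle g)^[n] u (shift^[n] z) := by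
  simpa only [Finset.sum_singleton] using
    hu.sum_le_iterate_ruelle (S := {z}) fun w hw => by rw [Finset.mem_singleton.1 hw]

theorem iterate_ruelle_le_mul (hu : RuelleSummable g u) {n k : ℕ} (hk : 1 ≤ k) {r : ℝ}
    (hr : ∀ z z', z ∈ cylOf z' (n + k) →
      Real.exp (birkhoff g n z) * u z ≤ r * (Real.exp (birkhoff g n z') * u z'))
    (hxy : x ∈ cylOf y k) :
    (MarkovShift.ruelle g)^[n] u x ≤ r * (MarkovShift.ruelle g)^[n] u y := by
  induction n generalizing u with
  | zero => simpa [birkhoff] using hr x y (by rwa [zero_add])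
  | succ n ih =>
    refine ih hu.ruelle fun w w' hw => ?_
    simp only [ruelle_eq_tsum, ← tsum_mul_left]
    refine ((hu.summable w).mul_left _).tsum_le_tsum (fun a => ?_)
      (((hu.summable w').mul_left _).mul_left _)
    have hww' : w.1 0 = w'.1 0 := hw 0 (by omega)
    simp only [ruelleTerm, hww']
    split_ifs with ha
    · have := hr (cons a w (hww' ▸ ha)) (cons a w' ha) (by
        simpa only [add_right_comm] using cons_mem_cylOf hw)
      simp only [birkhoff_succ, shift_cons, Real.exp_add] at this
      linarith
    · simp

end RuelleSummable

theorem BoundedFun.integrable (hu : BoundedFun u) (huc : Continuous u)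
    (ν : Measure (MarkovShift A)) [IsFiniteMeasure ν] : Integrable u ν :=
  .of_bound huc.aestronglyMeasurable hu.choose (.of_forall hu.choose_spec)

/-- The functions on which the eigenmeasure equation of `IsRPF` is tested. -/
structure IsTestFun (u : MarkovShift A → ℝ) : Prop where
  continuous : Continuous u
  nonneg : ∀ x, 0 ≤ u x
  bounded : BoundedFun u

theorem continuous_ruelleTerm (hg : Continuous g) (hu : Continuous u) (a : ℕ) :
    Continuous fun x => ruelleTerm g u x a := by
  refine continuous_iff_continuousAt.2 fun x => ?_
  have head_eq : ∀ᶠ y : MarkovShift A in 𝓝 x, y.1 0 = x.1 0 := by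
    filter_upwards [cylOf_mem_nhds x 1] with y hy using mem_cylOf_one.1 hy
  by_cases ha : A a (x.1 0) = true
  · refine Metric.tendsto_nhds.2 fun ε hε => ?_
    obtain ⟨n, hn⟩ := exists_cylOf_subset
      (Metric.tendsto_nhds.1 ((hg.rexp.mul hu).tendsto (cons a x ha)) ε hε)
    filter_upwards [cylOf_mem_nhds x n, head_eq] with y hyn hy
    have hay : A a (y.1 0) = true := hy ▸ ha
    simp only [ruelleTerm, dif_pos ha, dif_pos hay]
    exact hn (cylOf_anti _ n.le_succ (cons_mem_cylOf hyn))
  · refine continuousAt_const.congr (f := fun _ => (0 : ℝ)) ?_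
    filter_upwards [head_eq] with y hy
    rw [ruelleTerm, dif_neg (hy ▸ ha)]

theorem DominatedBy.ruelleTerm_le (hg : DominatedBy g c) {B : ℝ} (hB0 : 0 ≤ B)
    (hB : ∀ x, u x ≤ B) (x : MarkovShift A) (a : ℕ) : ruelleTerm g u x a ≤ c a * B := by
  rw [ruelleTerm]
  split_ifs with h
  · calc Real.exp (g (cons a x h)) * u (cons a x h) ≤ Real.exp (g (cons a x h)) * B :=
          mul_le_mul_of_nonneg_left (hB _) (Real.exp_pos _).le
      _ ≤ c a * B := mul_le_mul_of_nonneg_right (hg.exp_le _) hB0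
  · exact mul_nonneg (hg.nonneg a) hB0

namespace IsTestFun

theorem exists_le (hu : IsTestFun u) : ∃ B, 0 ≤ B ∧ ∀ x, u x ≤ B := by
  obtain ⟨B, hB⟩ := hu.bounded
  exact ⟨max B 0, le_max_right _ _, fun x => (le_abs_self _).trans (le_max_of_le_left (hB x))⟩

theorem summable_ruelleTerm (hu : IsTestFun u) (hg : DominatedBy g c) (x : MarkovShift A) :
    Summable (ruelleTerm g u x) := by
  obtain ⟨B, hB0, hB⟩ := hu.exists_le
  exact .of_nonneg_of_le (ruelleTerm_nonneg hu.nonneg x) (hg.ruelleTerm_le hB0 hB x)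
    (hg.summable.mul_right B)

theorem ruelle (hu : IsTestFun u) (hgc : Continuous g) (hg : DominatedBy g c) :
    IsTestFun (ruelle g u) := by
  obtain ⟨B, hB0, hB⟩ := hu.exists_le
  have hterm_nonneg := ruelleTerm_nonneg (g := g) hu.nonneg
  have hcB := hg.summable.mul_right B
  rw [funext (ruelle_eq_tsum g u)]
  refine ⟨continuous_tsum (continuous_ruelleTerm hgc hu.continuous) hcB fun a x => ?_,
    fun x => tsum_nonneg (hterm_nonneg x), ∑' a, c a * B, fun x => ?_⟩
  · rw [Real.norm_of_nonneg (hterm_nonneg x a)]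
    exact hg.ruelleTerm_le hB0 hB x a
  · rw [abs_of_nonneg (tsum_nonneg (hterm_nonneg x))]
    exact (hu.summable_ruelleTerm hg x).tsum_le_tsum (hg.ruelleTerm_le hB0 hB x) hcB

theorem iterate_ruelle (hu : IsTestFun u) (hgc : Continuous g) (hg : DominatedBy g c) (n : ℕ) :
    IsTestFun ((MarkovShift.ruelle g)^[n] u) := by
  induction n with
  | zero => exact hu
  | succ n ih =>
    rw [Function.iterate_succ_apply']
    exact ih.ruelle hgc hg

theorem ruelleSummable (hu : IsTestFun u) (hgc : Continuous g) (hg : DominatedBy g c) :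
    RuelleSummable g u :=
  ⟨hu.nonneg, fun n => (hu.iterate_ruelle hgc hg n).summable_ruelleTerm hg⟩

theorem integrable (hu : IsTestFun u) (ν : Measure (MarkovShift A)) [IsFiniteMeasure ν] :
    Integrable u ν :=
  hu.bounded.integrable hu.continuous ν

theorem indicator_cylOf (x : MarkovShift A) (n : ℕ) :
    IsTestFun ((cylOf x n).indicator fun _ => (1 : ℝ)) where
  continuous := continuous_of_forall_mem_cylOf n fun y z hyz => by
    have mem_iff : y ∈ cylOf x n ↔ z ∈ cylOf x n :=
      ⟨mem_cylOf_trans (mem_cylOf_symm hyz), mem_cylOf_trans hyz⟩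
    by_cases hz : z ∈ cylOf x n <;> simp [mem_iff, hz]
  nonneg := Set.indicator_nonneg fun _ _ => zero_le_one
  bounded := ⟨1, fun y => by
    by_cases hy : y ∈ cylOf x n <;> simp [hy]⟩

end IsTestFun

end

/-! ### Eigenfunctions and eigenmeasures -/

section

variable {A : ℕ → ℕ → Bool} {g h : MarkovShift A → ℝ} {x y : MarkovShift A}

/-- The largest function below `N` and `h` that depends on the first `N` coordinates only. It
approximates the possibly unbounded function `h` by test functions. -/
noncomputable def minorant (h : MarkovShift A → ℝ) (N : ℕ) (x : MarkovShift A) : ℝ :=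
  min (N : ℝ) (sInf (h '' cylOf x N))

theorem minorant_nonneg (hh : ∀ x, 0 ≤ h x) (N : ℕ) (x : MarkovShift A) : 0 ≤ minorant h N x :=
  le_min N.cast_nonneg (Real.sInf_nonneg (Set.forall_mem_image.2 fun y _ => hh y))

theorem minorant_le (hh : ∀ x, 0 ≤ h x) (N : ℕ) (x : MarkovShift A) : minorant h N x ≤ h x :=
  (min_le_right _ _).trans <|
    csInf_le ⟨0, Set.forall_mem_image.2 fun y _ => hh y⟩ ⟨x, self_mem_cylOf x N, rfl⟩

theorem minorant_congr (h : MarkovShift A → ℝ) {N : ℕ} (hxy : x ∈ cylOf y N) :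
    minorant h N x = minorant h N y := by
  have hcyl : cylOf x N = cylOf y N := Set.ext fun z =>
    ⟨fun hz => mem_cylOf_trans hz hxy, fun hz => mem_cylOf_trans hz (mem_cylOf_symm hxy)⟩
  rw [minorant, hcyl, minorant]

theorem isTestFun_minorant (hh : ∀ x, 0 ≤ h x) (N : ℕ) : IsTestFun (minorant h N) where
  continuous := continuous_of_forall_mem_cylOf N fun _ _ => minorant_congr h
  nonneg := minorant_nonneg hh N
  bounded := ⟨N, fun x => by
    rw [abs_of_nonneg (minorant_nonneg hh N x)]
    exact min_le_left _ _⟩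

theorem tendsto_minorant (hc : Continuous h) (hh : ∀ x, 0 ≤ h x) (x : MarkovShift A) :
    Tendsto (fun N => minorant h N x) atTop (𝓝 (h x)) := by
  refine tendsto_order.2 ⟨fun a ha => ?_, fun a ha => .of_forall fun N =>
    (minorant_le hh N x).trans_lt ha⟩
  obtain ⟨b, hab, hbx⟩ := exists_between ha
  obtain ⟨n, hn⟩ := exists_cylOf_subset (hc.continuousAt.eventually_const_lt hbx)
  filter_upwards [eventually_ge_atTop n, eventually_ge_atTop ⌈b⌉₊] with N hnN hbN
  refine hab.trans_le (le_min (Nat.ceil_le.1 hbN) ?_)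
  exact le_csInf ⟨h x, x, self_mem_cylOf x N, rfl⟩
    (Set.forall_mem_image.2 fun y hy => (hn (cylOf_anti x hnN hy)).le)

/-- Approximation of `h` from below by `exp(-Np) L^N` of test functions, which inherit the
regularity of the Birkhoff sums of `g`. -/
noncomputable def lowerApprox (g : MarkovShift A → ℝ) (p : ℝ) (h : MarkovShift A → ℝ) (N : ℕ)
    (x : MarkovShift A) : ℝ :=
  Real.exp (-(N * p)) * (ruelle g)^[N] (minorant h N) x

namespace IsRPF

variable {c : ℕ → ℝ} {p : ℝ} {ν : Measure (MarkovShift A)} {u : MarkovShift A → ℝ}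

theorem continuous (H : IsRPF g p h ν) : Continuous h := H.1

theorem pos (H : IsRPF g p h ν) (x : MarkovShift A) : 0 < h x := H.2.1 x

theorem nonneg (H : IsRPF g p h ν) (x : MarkovShift A) : 0 ≤ h x := (H.pos x).le

theorem isProbabilityMeasure (H : IsRPF g p h ν) : IsProbabilityMeasure ν := H.2.2.2.1

theorem integral_eigenfunction (H : IsRPF g p h ν) : ∫ x, h x ∂ν = 1 := H.2.2.2.2.2

theorem integrable (H : IsRPF g p h ν) : Integrable h ν := by
  by_contra hi
  exact zero_ne_one ((integral_undef hi).symm.trans H.integral_eigenfunction)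

theorem iterate_ruelle (H : IsRPF g p h ν) (n : ℕ) :
    (ruelle g)^[n] h = fun x => Real.exp (n * p) * h x := by
  induction n with
  | zero => simp
  | succ n ih =>
    rw [Function.iterate_succ_apply', ih]
    funext x
    rw [ruelle_const_mul, H.2.2.1 x, ← mul_assoc, ← Real.exp_add, Nat.cast_succ, add_one_mul]

theorem ruelleSummable (H : IsRPF g p h ν) : RuelleSummable g h where
  nonneg := H.nonneg
  summable_iterate n x := by
    by_contra hs
    have hzero : ruelle g ((ruelle g)^[n] h) x = 0 := by
      rw [ruelle_eq_tsum, tsum_eq_zero_of_not_summable hs]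
    rw [← Function.iterate_succ_apply' (ruelle g), H.iterate_ruelle] at hzero
    exact (mul_pos (Real.exp_pos _) (H.pos x)).ne' hzero

theorem integral_iterate_ruelle (H : IsRPF g p h ν) (hgc : Continuous g)
    (hg : DominatedBy g c) (hu : IsTestFun u) (n : ℕ) :
    ∫ x, (ruelle g)^[n] u x ∂ν = Real.exp (n * p) * ∫ x, u x ∂ν := by
  induction n with
  | zero => simp
  | succ n ih =>
    have hun := hu.iterate_ruelle hgc hg n
    rw [Function.iterate_succ_apply', H.2.2.2.2.1 _ hun.continuous hun.bounded, ih, ← mul_assoc,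
      ← Real.exp_add, Nat.cast_succ, add_one_mul, add_comm p]

/-- If `ν` did not charge a cylinder, then neither would any iterate of its indicator function,
but some iterate is positive everywhere. -/
theorem isOpenPosMeasure (H : IsRPF g p h ν) (hA : FinitelyPrimitive A) (hgc : Continuous g)
    (hg : DominatedBy g c) : ν.IsOpenPosMeasure := by
  have := H.isProbabilityMeasure
  refine ⟨fun U hU ⟨x, hxU⟩ hνU => ?_⟩
  obtain ⟨n, hnU⟩ := exists_cylOf_subset (hU.mem_nhds hxU)
  obtain ⟨K, F, hF⟩ := hA.exists_isBridging
  have hu := IsTestFun.indicator_cylOf x (n + 1)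
  set u := (cylOf x (n + 1)).indicator fun _ => (1 : ℝ) with hu_def
  have hLu := hu.iterate_ruelle hgc hg (K + 1 + n)
  have hpos (y : MarkovShift A) : 0 < (ruelle g)^[K + 1 + n] u y := by
    obtain ⟨z, hzx, hzy, -⟩ := hF (x.1 n) ⟨shift^[n] x, iterate_shift_apply_zero x n⟩ y
    obtain ⟨w, hw, rfl⟩ := exists_mem_cylOf_iterate_shift_eq hzx
    rw [← hzy, ← Function.iterate_add_apply]
    refine lt_of_lt_of_le ?_ ((hu.ruelleSummable hgc hg).exp_birkhoff_mul_le _ w)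
    rw [hu_def, Set.indicator_of_mem hw, mul_one]
    exact Real.exp_pos _
  have hintegral : ∫ y, u y ∂ν = 0 := by
    rw [hu_def, integral_indicator (isOpen_cylOf x _).measurableSet,
      Measure.restrict_eq_zero.2 (measure_mono_null ((cylOf_anti x n.le_succ).trans hnU) hνU),
      integral_zero_measure]
  have hLintegral := H.integral_iterate_ruelle hgc hg hu (K + 1 + n)
  rw [hintegral, mul_zero, integral_eq_zero_iff_of_nonneg hLu.nonneg (hLu.integrable ν)]
    at hLintegral
  obtain ⟨y, hy⟩ := hLintegral.exists
  exact (hpos y).ne' hy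

theorem lowerApprox_le (H : IsRPF g p h ν) (hgc : Continuous g) (hg : DominatedBy g c) (N : ℕ)
    (x : MarkovShift A) : lowerApprox g p h N x ≤ h x :=
  calc lowerApprox g p h N x ≤ Real.exp (-(N * p)) * (ruelle g)^[N] h x :=
        mul_le_mul_of_nonneg_left
          (((isTestFun_minorant H.nonneg N).ruelleSummable hgc hg).iterate_ruelle_mono
            H.ruelleSummable (minorant_le H.nonneg N) N x) (Real.exp_pos _).le
    _ = h x := by rw [H.iterate_ruelle, ← mul_assoc, ← Real.exp_add, neg_add_cancel, Real.exp_zero,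
        one_mul]

theorem integrable_lowerApprox (H : IsRPF g p h ν) (hgc : Continuous g) (hg : DominatedBy g c)
    (N : ℕ) : Integrable (lowerApprox g p h N) ν :=
  have := H.isProbabilityMeasure
  (((isTestFun_minorant H.nonneg N).iterate_ruelle hgc hg N).integrable ν).const_mul _

theorem tendsto_integral_lowerApprox (H : IsRPF g p h ν) (hgc : Continuous g)
    (hg : DominatedBy g c) :
    Tendsto (fun N => ∫ x, lowerApprox g p h N x ∂ν) atTop (𝓝 (∫ x, h x ∂ν)) := by
  have hm := isTestFun_minorant H.nonneg
  have integral_eq (N : ℕ) : ∫ x, lowerApprox g p h N x ∂ν = ∫ x, minorant h N x ∂ν := by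
    simp only [lowerApprox]
    rw [integral_const_mul, H.integral_iterate_ruelle hgc hg (hm N), ← mul_assoc, ← Real.exp_add,
      neg_add_cancel, Real.exp_zero, one_mul]
  simp only [integral_eq]
  refine tendsto_integral_of_dominated_convergence h
    (fun N => (hm N).continuous.aestronglyMeasurable) H.integrable
    (fun N => .of_forall fun x => ?_) (.of_forall (tendsto_minorant H.continuous H.nonneg))
  rw [Real.norm_of_nonneg ((hm N).nonneg x)]
  exact minorant_le H.nonneg N x

theorem lowerApprox_le_exp_mul (H : IsRPF g p h ν) (hgc : Continuous g) (hg : DominatedBy g c)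
    {D : ℝ} {k N : ℕ} (hk : 1 ≤ k)
    (hD : ∀ z z', z ∈ cylOf z' (N + k) → birkhoff g N z ≤ D + birkhoff g N z')
    (hxy : x ∈ cylOf y k) : lowerApprox g p h N x ≤ Real.exp D * h y :=
  have hm := isTestFun_minorant H.nonneg N
  have iterate_le : (ruelle g)^[N] (minorant h N) x ≤
      Real.exp D * (ruelle g)^[N] (minorant h N) y :=
    (hm.ruelleSummable hgc hg).iterate_ruelle_le_mul hk (fun z z' hz => by
      rw [minorant_congr h (cylOf_anti z' (Nat.le_add_right N k) hz), ← mul_assoc, ← Real.exp_add]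
      exact mul_le_mul_of_nonneg_right (Real.exp_le_exp.2 (hD z z' hz)) (hm.nonneg z')) hxy
  calc lowerApprox g p h N x
      ≤ Real.exp (-(N * p)) * (Real.exp D * (ruelle g)^[N] (minorant h N) y) :=
        mul_le_mul_of_nonneg_left iterate_le (Real.exp_pos _).le
    _ = Real.exp D * lowerApprox g p h N y := mul_left_comm _ _ _
    _ ≤ Real.exp D * h y := mul_le_mul_of_nonneg_left (H.lowerApprox_le hgc hg N y)
        (Real.exp_pos _).le

theorem eq_zero_of_le_sub_lowerApprox (H : IsRPF g p h ν) (hA : FinitelyPrimitive A)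
    (hgc : Continuous g) (hg : DominatedBy g c) (hu : Continuous u) (hu0 : ∀ x, 0 ≤ u x)
    (hle : ∀ N, 1 ≤ N → ∀ x, u x ≤ h x - lowerApprox g p h N x) : u = 0 := by
  have := H.isOpenPosMeasure hA hgc hg
  have hlower := H.integrable_lowerApprox hgc hg
  have hdiff (N : ℕ) : Integrable (fun x => h x - lowerApprox g p h N x) ν :=
    H.integrable.sub (hlower N)
  have integral_le (N : ℕ) (hN : 1 ≤ N) :
      ∫ x, u x ∂ν ≤ ∫ x, h x ∂ν - ∫ x, lowerApprox g p h N x ∂ν := by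
    rw [← integral_sub H.integrable (hlower N)]
    exact integral_mono_of_nonneg (.of_forall hu0) (hdiff N) (.of_forall (hle N hN))
  have integral_eq : ∫ x, u x ∂ν = 0 := by
    refine le_antisymm ?_ (integral_nonneg hu0)
    have hlim := (H.tendsto_integral_lowerApprox hgc hg).const_sub (∫ x, h x ∂ν)
    rw [sub_self] at hlim
    exact ge_of_tendsto hlim ((eventually_ge_atTop 1).mono integral_le)
  have hu_integrable : Integrable u ν :=
    (hdiff 1).mono' hu.aestronglyMeasurable <| .of_forall fun x =>
      (Real.norm_of_nonneg (hu0 x)).trans_le (hle 1 le_rfl x)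
  exact (hu.ae_eq_iff_eq ν continuous_zero).1
    ((integral_eq_zero_iff_of_nonneg hu0 hu_integrable).1 integral_eq)

theorem le_exp_mul_of_mem_cylOf (H : IsRPF g p h ν) (hA : FinitelyPrimitive A)
    (hgc : Continuous g) (hg : DominatedBy g c) {D : ℝ} {k : ℕ} (hk : 1 ≤ k)
    (hD : ∀ n, 1 ≤ n → ∀ z z', z ∈ cylOf z' (n + k) → birkhoff g n z ≤ D + birkhoff g n z')
    (hxy : x ∈ cylOf y k) : h x ≤ Real.exp D * h y := by
  have hcyl := IsTestFun.indicator_cylOf y k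
  let excess (z : MarkovShift A) : ℝ :=
    (cylOf y k).indicator (fun _ => 1) z * max (h z - Real.exp D * h y) 0
  have excess_nonneg (z : MarkovShift A) : 0 ≤ excess z :=
    mul_nonneg (hcyl.nonneg z) (le_max_right _ _)
  have excess_continuous : Continuous excess :=
    hcyl.continuous.mul ((H.continuous.sub continuous_const).max continuous_const)
  have excess_le (N : ℕ) (hN : 1 ≤ N) (z : MarkovShift A) :
      excess z ≤ h z - lowerApprox g p h N z := by
    have hz_lower := sub_nonneg.2 (H.lowerApprox_le hgc hg N z)
    by_cases hz : z ∈ cylOf y k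
    · have := H.lowerApprox_le_exp_mul hgc hg hk (hD N hN) hz
      simpa only [excess, Set.indicator_of_mem hz, one_mul] using max_le (by linarith) hz_lower
    · simpa only [excess, Set.indicator_of_notMem hz, zero_mul] using hz_lower
  have excess_eq_zero : excess x = 0 := congrFun
    (H.eq_zero_of_le_sub_lowerApprox hA hgc hg excess_continuous excess_nonneg excess_le) x
  simpa only [excess, Set.indicator_of_mem hxy, one_mul, max_eq_right_iff, sub_nonpos]
    using excess_eq_zero

theorem exp_pressure_le (H : IsRPF g p h ν) (hgc : Continuous g) (hg : DominatedBy g c) :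
    Real.exp p ≤ ∑' a, c a := by
  have := H.isProbabilityMeasure
  have hone : IsTestFun fun _ : MarkovShift A => (1 : ℝ) :=
    ⟨continuous_const, fun _ => zero_le_one, 1, fun _ => by simp⟩
  have ruelle_one_le (x : MarkovShift A) : ruelle g (fun _ => 1) x ≤ ∑' a, c a := by
    rw [ruelle_eq_tsum]
    refine (hone.summable_ruelleTerm hg x).tsum_le_tsum (fun a => ?_) hg.summable
    simpa only [mul_one] using hg.ruelleTerm_le zero_le_one (fun _ => le_rfl) x a
  calc Real.exp p = ∫ x, ruelle g (fun _ => 1) x ∂ν := by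
        rw [H.2.2.2.2.1 _ hone.continuous hone.bounded]
        simp
    _ ≤ ∫ _, ∑' a, c a ∂ν :=
        integral_mono ((hone.ruelle hgc hg).integrable ν) (integrable_const _) ruelle_one_le
    _ = ∑' a, c a := by simp

end IsRPF

end

/-! ### Estimates uniform in the inverse temperature -/

section

variable {A : ℕ → ℕ → Bool} {f g h : MarkovShift A → ℝ} {x y : MarkovShift A}

namespace IsRPF

variable {c : ℕ → ℝ} {p β : ℝ} {ν : Measure (MarkovShift A)}

theorem exp_mul_le_of_bridge (H : IsRPF g p h ν) {D₀ D₁ B : ℝ} {K : ℕ}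
    (hD₀ : g x ≤ D₀ + g y) (hD₁ : h x ≤ Real.exp D₁ * h y)
    (hB : ∀ j < K, -B ≤ g (shift^[j + 1] y)) :
    Real.exp (g x) * h x ≤
      Real.exp (D₀ + D₁ + K * B) * (Real.exp (birkhoff g (K + 1) y) * h y) := by
  have htail : ∑ _j ∈ Finset.range K, -B ≤ birkhoff g K (shift y) :=
    Finset.sum_le_sum fun j hj => hB j (Finset.mem_range.1 hj)
  rw [Finset.sum_const, Finset.card_range, nsmul_eq_mul] at htail
  have hgx : g x ≤ D₀ + K * B + birkhoff g (K + 1) y := by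
    rw [birkhoff_succ]
    linarith
  calc Real.exp (g x) * h x
      ≤ Real.exp (D₀ + K * B + birkhoff g (K + 1) y) * (Real.exp D₁ * h y) :=
        mul_le_mul (Real.exp_le_exp.2 hgx) hD₁ (H.nonneg x) (Real.exp_pos _).le
    _ = _ := by
        simp only [Real.exp_add]
        ring

theorem le_exp_mul (H : IsRPF g p h ν) {K : ℕ} {F : Finset ℕ} (hF : IsBridging A K F)
    {D₀ D₁ B : ℝ} (hD₀ : ∀ x y, x.1 0 = y.1 0 → g x ≤ D₀ + g y)
    (hD₁ : ∀ x y, x.1 0 = y.1 0 → h x ≤ Real.exp D₁ * h y)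
    (hB : ∀ x, x.1 0 ∈ F → -B ≤ g x) (x y : MarkovShift A) :
    h x ≤ Real.exp (D₀ + D₁ + K * B + K * p) * h y := by
  classical
  choose z hzw hzy hzF using fun w : MarkovShift A => hF (w.1 0) ⟨w, rfl⟩ y
  have term_le (w : MarkovShift A) : Real.exp (g w) * h w ≤
      Real.exp (D₀ + D₁ + K * B) * (Real.exp (birkhoff g (K + 1) (z w)) * h (z w)) :=
    H.exp_mul_le_of_bridge (hD₀ _ _ (hzw w).symm) (hD₁ _ _ (hzw w).symm) fun j hj => hB _ <| by
      rw [iterate_shift_apply_zero]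
      exact hzF w _ (by omega) hj
  let bridge (w : {w : MarkovShift A // shift w = x}) : MarkovShift A := z w.1
  have hbridge : Function.Injective bridge := fun w w' hww' => Subtype.ext <|
    head_injOn_fiber x w.2 w'.2 <|
      (hzw w.1).symm.trans ((congrArg (fun t : MarkovShift A => t.1 0) hww').trans (hzw w'.1))
  have sum_le (T : Finset {w : MarkovShift A // shift w = x}) :
      ∑ w ∈ T, Real.exp (birkhoff g (K + 1) (bridge w)) * h (bridge w) ≤
        (ruelle g)^[K + 1] h y := by
    refine (Finset.sum_image (f := fun z => Real.exp (birkhoff g (K + 1) z) * h z)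
      hbridge.injOn).symm.trans_le (H.ruelleSummable.sum_le_iterate_ruelle fun _ hw => ?_)
    obtain ⟨w, -, rfl⟩ := Finset.mem_image.1 hw
    exact hzy w.1
  have ruelle_le : ruelle g h x ≤
      Real.exp (D₀ + D₁ + K * B) * (ruelle g)^[K + 1] h y := by
    refine tsum_le_of_sum_le' (mul_nonneg (Real.exp_pos _).le ?_) fun T =>
      (Finset.sum_le_sum fun w _ => term_le w.1).trans ?_
    · simpa only [Finset.sum_empty] using sum_le ∅
    · rw [← Finset.mul_sum]
      exact mul_le_mul_of_nonneg_left (sum_le T) (Real.exp_pos _).le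
  rw [H.2.2.1, H.iterate_ruelle] at ruelle_le
  refine le_of_mul_le_mul_left (ruelle_le.trans_eq ?_) (Real.exp_pos p)
  simp only [Nat.cast_succ, add_one_mul, Real.exp_add]
  ring

theorem log_div_sub_log_div_le (H : IsRPF g p h ν) (hβ : 0 < β) {D : ℝ}
    (hxy : h x ≤ Real.exp (β * D) * h y) : Real.log (h x) / β - Real.log (h y) / β ≤ D := by
  have hlog := Real.log_le_log (H.pos x) hxy
  rw [Real.log_mul (Real.exp_pos _).ne' (H.pos y).ne', Real.log_exp] at hlog
  rw [← sub_div, div_le_iff₀' hβ]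
  linarith

theorem le_exp_waltersSup_mul (H : IsRPF (fun x => β * f x) p h ν) (hA : FinitelyPrimitive A)
    (hf : SatisfiesWalters f) (hc : DominatedBy f c) (hβ : 1 ≤ β) {k : ℕ} (hk : 1 ≤ k)
    (hxy : x ∈ cylOf y k) : h x ≤ Real.exp (β * waltersSup f k) * h y := by
  refine H.le_exp_mul_of_mem_cylOf hA (continuous_const.mul hf.continuous) (hc.const_mul hβ) hk
    (fun n hn z z' hz => ?_) hxy
  have := mul_le_mul_of_nonneg_left (abs_le.1 (hf.abs_birkhoff_sub_le hk hn hz)).2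
    (zero_le_one.trans hβ)
  rw [birkhoff_const_mul, birkhoff_const_mul]
  linarith

theorem variationBound_log_div (H : IsRPF (fun x => β * f x) p h ν) (hA : FinitelyPrimitive A)
    (hf : SatisfiesWalters f) (hc : DominatedBy f c) (hβ : 1 ≤ β) :
    VariationBound 1 (waltersSup f) fun x => Real.log (h x) / β := fun k hk x y hxy => by
  have hle {x y : MarkovShift A} (hxy : x ∈ cylOf y k) :=
    H.log_div_sub_log_div_le (one_pos.trans_le hβ) (H.le_exp_waltersSup_mul hA hf hc hβ hk hxy)
  exact abs_sub_le_iff.2 ⟨hle hxy, hle (mem_cylOf_symm hxy)⟩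

theorem pressure_div_le (H : IsRPF (fun x => β * f x) p h ν) (hf : Continuous f)
    (hc : DominatedBy f c) (hβ : 1 ≤ β) : p / β ≤ ∑' a, c a := by
  set T := ∑' a, c a
  rw [div_le_iff₀' (one_pos.trans_le hβ), ← Real.exp_le_exp]
  calc Real.exp p ≤ ∑' a, Real.exp ((β - 1) * T) * c a :=
        H.exp_pressure_le (continuous_const.mul hf) (hc.const_mul hβ)
    _ = Real.exp ((β - 1) * T) * T := tsum_mul_left
    _ ≤ Real.exp ((β - 1) * T) * Real.exp T :=
        mul_le_mul_of_nonneg_left (by linarith [Real.add_one_le_exp T]) (Real.exp_pos _).le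
    _ = Real.exp (β * T) := by
        rw [← Real.exp_add]
        ring_nf

/-- Since `h` is multiplicatively almost constant on the cylinders of length one, it suffices to
join them by bridging words, whose cost is linear in `β`. -/
theorem exists_abs_log_div_sub_le (hA : FinitelyPrimitive A) (hf : SatisfiesWalters f)
    (hf₁ : Var1Finite f) (hc : DominatedBy f c) :
    ∃ C, ∀ β p h (ν : Measure (MarkovShift A)), 1 ≤ β → IsRPF (fun x => β * f x) p h ν →
      ∀ x y, |Real.log (h x) / β - Real.log (h y) / β| ≤ C := by
  obtain ⟨K, F, hF⟩ := hA.exists_isBridging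
  obtain ⟨D, hD⟩ := hf₁.exists_abs_sub_le
  obtain ⟨B, -, hB⟩ := hf₁.exists_abs_le F
  refine ⟨D + waltersSup f 1 + K * B + K * ∑' a, c a, fun β p h ν hβ H => ?_⟩
  have hβ0 : 0 < β := one_pos.trans_le hβ
  have hle (x y : MarkovShift A) : h x ≤
      Real.exp (β * (D + waltersSup f 1 + K * B + K * ∑' a, c a)) * h y := by
    refine (H.le_exp_mul hF (D₀ := β * D) (D₁ := β * waltersSup f 1) (B := β * B)
      (fun x y hxy => ?_) (fun x y hxy => ?_) (fun x hx => ?_) x y).trans ?_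
    · linarith [mul_le_mul_of_nonneg_left (abs_le.1 (hD x y hxy)).2 hβ0.le]
    · exact H.le_exp_waltersSup_mul hA hf hc hβ le_rfl (mem_cylOf_one.2 hxy)
    · linarith [mul_le_mul_of_nonneg_left (abs_le.1 (hB x hx)).1 hβ0.le]
    · refine mul_le_mul_of_nonneg_right (Real.exp_le_exp.2 ?_) (H.nonneg y)
      have hp := (div_le_iff₀' hβ0).1 (H.pressure_div_le hf.continuous hc hβ)
      linarith [mul_le_mul_of_nonneg_left hp K.cast_nonneg]
  exact fun x y => abs_sub_le_iff.2
    ⟨H.log_div_sub_log_div_le hβ0 (hle x y), H.log_div_sub_log_div_le hβ0 (hle y x)⟩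

end IsRPF

end

/-! ### Normalized potentials and calibrated sub-actions -/

section

variable {A : ℕ → ℕ → Bool} {f V W : MarkovShift A → ℝ} {c : ℝ} {μ : Measure (MarkovShift A)}

/-- The potential `f + V - V ∘ σ - c`, cohomologous to `f - c`. It is `R₋` if `V` is a calibrated
sub-action and `c = m(f)`. -/
def normalized (f V : MarkovShift A → ℝ) (c : ℝ) (x : MarkovShift A) : ℝ :=
  f x + V x - V (shift x) - c

/-- `V` is a bounded calibrated sub-action of `f`, with a constant `c` which is not assumed to be
`m(f)`; see `IsCalibrated.mf_eq`. -/
structure IsCalibrated (f V : MarkovShift A → ℝ) (c : ℝ) : Prop where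
  continuous : Continuous V
  bounded : BoundedFun V
  nonpos : ∀ x, normalized f V c x ≤ 0
  exists_eq_zero : ∀ y, ∃ x, shift x = y ∧ normalized f V c x = 0

theorem isCalibratedSubaction_iff : IsCalibratedSubaction f V ↔ IsCalibrated f V (mf f) :=
  ⟨fun ⟨h₁, h₂, h₃, h₄⟩ => ⟨h₁, h₂, h₃, h₄⟩, fun ⟨h₁, h₂, h₃, h₄⟩ => ⟨h₁, h₂, h₃, h₄⟩⟩

/-- The modulus `M_k` bounding the variations of every normalized potential. -/
noncomputable def normalizedModulus (f : MarkovShift A → ℝ) (k : ℕ) : ℝ :=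
  2 * waltersSup f (k - 1) + waltersSup f k

theorem waltersSup_le_normalizedModulus (f : MarkovShift A → ℝ) (k : ℕ) :
    waltersSup f k ≤ normalizedModulus f k := by
  rw [normalizedModulus]
  linarith [waltersSup_nonneg f (k - 1)]

theorem SatisfiesWalters.tendsto_normalizedModulus (hf : SatisfiesWalters f) :
    Tendsto (normalizedModulus f) atTop (𝓝 0) := by
  have h := ((hf.2.comp (tendsto_sub_atTop_nat 1)).const_mul 2).add hf.2
  rw [mul_zero, add_zero] at h
  exact h

theorem SatisfiesWalters.variationBound_normalized (hf : SatisfiesWalters f)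
    (hV : VariationBound 1 (waltersSup f) V) (c : ℝ) :
    VariationBound 2 (normalizedModulus f) (normalized f V c) := by
  intro k hk x y hxy
  have hσ : shift x ∈ cylOf (shift y) (k - 1) :=
    shift_mem_cylOf (cylOf_anti y (by omega) hxy)
  have hfxy := abs_le.1 (hf.variationBound k hk x y hxy)
  have hVxy := abs_le.1 (hV k (by omega) x y hxy)
  have hVσ := abs_le.1 (hV (k - 1) (by omega) _ _ hσ)
  simp only [normalized, normalizedModulus, abs_le]
  constructor <;> linarith

theorem birkhoff_normalized (f V : MarkovShift A → ℝ) (c : ℝ) (n : ℕ) (x : MarkovShift A) :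
    birkhoff (normalized f V c) n x = birkhoff f n x + V x - V (shift^[n] x) - n * c := by
  induction n generalizing x with
  | zero => simp [birkhoff]
  | succ n ih =>
    rw [birkhoff_succ, birkhoff_succ, ih, Function.iterate_succ_apply, normalized]
    push_cast
    ring

theorem SatisfiesWalters.abs_birkhoff_normalized_sub_le (hf : SatisfiesWalters f)
    (hV : VariationBound 1 (waltersSup f) V) (c : ℝ) {n k : ℕ} (hn : 1 ≤ n) (hk : 1 ≤ k)
    {x y : MarkovShift A} (hxy : x ∈ cylOf y (n + k)) :
    |birkhoff (normalized f V c) n x - birkhoff (normalized f V c) n y| ≤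
      varBirk f n (n + k) + waltersSup f (n + k) + waltersSup f k := by
  have hfxy := abs_le.1 (hf.abs_birkhoff_sub_le_varBirk hk hn hxy)
  have hVxy := abs_le.1 (hV (n + k) (by omega) x y hxy)
  have hVσ := abs_le.1 (hV k hk _ _ (iterate_shift_mem_cylOf hxy))
  simp only [birkhoff_normalized, abs_le]
  constructor <;> linarith

/-! ### Maximizing measures -/

instance : TopologicalSpace.MetrizableSpace (MarkovShift A) :=
  IsEmbedding.subtypeVal.metrizableSpace

theorem isClosedEmbedding_subtype_val :
    IsClosedEmbedding fun x : MarkovShift A => x.1 := by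
  have hclosed : IsClosed {x : ℕ → ℕ | ∀ i, A (x i) (x (i + 1)) = true} := by
    rw [Set.ofPred_forall]
    exact isClosed_iInter fun i =>
      (isClosed_discrete {p : ℕ × ℕ | A p.1 p.2 = true}).preimage
        (f := fun x : ℕ → ℕ => (x i, x (i + 1))) (by fun_prop)
  exact hclosed.isClosedEmbedding_subtypeVal

theorem isCompact_setOf_forall_mem (G : ℕ → Finset ℕ) :
    IsCompact {x : MarkovShift A | ∀ i, x.1 i ∈ G i} := by
  have hbox : IsCompact (Set.univ.pi fun i => (G i : Set ℕ)) :=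
    isCompact_univ_pi fun i => (G i).finite_toSet.isCompact
  simpa only [Set.preimage, Set.mem_univ_pi, Finset.mem_coe] using
    isClosedEmbedding_subtype_val.isCompact_preimage hbox

theorem exists_isCompact_forall_iterate_mem {T : MarkovShift A → MarkovShift A}
    (hT : Function.LeftInverse shift T) {G : Set ℕ} (hG : G.Finite) (hTG : ∀ x, (T x).1 0 ∈ G)
    (y : MarkovShift A) : ∃ K, IsCompact K ∧ ∀ n, T^[n] y ∈ K := by
  classical
  refine ⟨_, isCompact_setOf_forall_mem fun i => hG.toFinset ∪ (Finset.range (i + 1)).image y.1,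
    fun n => ?_⟩
  simp only [Set.mem_ofPred_eq, Finset.mem_union, hG.mem_toFinset, Finset.mem_image,
    Finset.mem_range]
  induction n with
  | zero => exact fun i => Or.inr ⟨i, by omega, rfl⟩
  | succ n ih =>
    rw [Function.iterate_succ_apply']
    intro i
    cases i with
    | zero => exact Or.inl (hTG _)
    | succ i =>
      have hcoord : (T (T^[n] y)).1 (i + 1) = (T^[n] y).1 i :=
        congrArg (fun t : MarkovShift A => t.1 i) (hT (T^[n] y))
      rw [hcoord]
      exact (ih i).imp_right fun ⟨j, hj, hij⟩ => ⟨j, by omega, hij⟩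

theorem BoundedFun.comp_shift (hV : BoundedFun V) : BoundedFun fun x => V (shift x) :=
  hV.imp fun _ h _ => h _

theorem BoundedFun.sub (hV : BoundedFun V) (hW : BoundedFun W) : BoundedFun (V - W) := by
  obtain ⟨B, hB⟩ := hV
  obtain ⟨C, hC⟩ := hW
  exact ⟨B + C, fun x => (abs_sub _ _).trans (add_le_add (hB x) (hC x))⟩

theorem IsInvariantProb.integral_coboundary (hμ : IsInvariantProb μ) (hV : Continuous V)
    (hVb : BoundedFun V) : ∫ x, (V (shift x) - V x) ∂μ = 0 := by
  have := hμ.1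
  have hVσ : ∫ x, V (shift x) ∂μ = ∫ x, V x ∂μ := by
    conv_rhs => rw [← hμ.2]
    exact (integral_map continuous_shift.aemeasurable hV.aestronglyMeasurable).symm
  rw [integral_sub (hVb.comp_shift.integrable (hV.comp continuous_shift) μ)
    (hVb.integrable hV μ), hVσ, sub_self]

namespace IsCalibrated

variable {w : ℕ → ℝ}

theorem integrable_coboundary_add (hV : IsCalibrated f V c) [IsFiniteMeasure μ] :
    Integrable (fun x => V (shift x) - V x + c) μ :=
  ((hV.bounded.comp_shift.integrable (hV.continuous.comp continuous_shift) μ).sub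
    (hV.bounded.integrable hV.continuous μ)).add (integrable_const c)

theorem integral_coboundary_add (hV : IsCalibrated f V c) (hμ : IsInvariantProb μ) :
    ∫ x, (V (shift x) - V x + c) ∂μ = c := by
  have := hμ.1
  have hcob : Integrable (fun x => V (shift x) - V x) μ :=
    (hV.bounded.comp_shift.integrable (hV.continuous.comp continuous_shift) μ).sub
      (hV.bounded.integrable hV.continuous μ)
  rw [integral_add hcob (integrable_const c),
    hμ.integral_coboundary hV.continuous hV.bounded]
  simp

theorem integral_le (hV : IsCalibrated f V c) (hμ : IsInvariantProb μ) (hf : Integrable f μ) :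
    ∫ x, f x ∂μ ≤ c := by
  have := hμ.1
  refine (integral_mono hf hV.integrable_coboundary_add fun x => ?_).trans_eq
    (hV.integral_coboundary_add hμ)
  have hx := hV.nonpos x
  rw [normalized] at hx
  linarith

theorem integral_eq (hV : IsCalibrated f V c) (hμ : IsInvariantProb μ)
    (hR : ∀ᵐ x ∂μ, normalized f V c x = 0) : Integrable f μ ∧ ∫ x, f x ∂μ = c := by
  have := hμ.1
  have hf : f =ᵐ[μ] fun x => V (shift x) - V x + c := by
    filter_upwards [hR] with x hx
    rw [normalized] at hx
    linarith
  exact ⟨hV.integrable_coboundary_add.congr hf.symm,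
    (integral_congr_ae hf).trans (hV.integral_coboundary_add hμ)⟩

theorem continuous_normalized (hV : IsCalibrated f V c) (hf : Continuous f) :
    Continuous (normalized f V c) :=
  ((hf.add hV.continuous).sub (hV.continuous.comp continuous_shift)).sub continuous_const

theorem exists_isCompact_backward_orbit (hV : IsCalibrated f V c) (hw : DominatedBy f w)
    {T : MarkovShift A → MarkovShift A} (hT : Function.LeftInverse shift T)
    (hTR : ∀ x, normalized f V c (T x) = 0) (y : MarkovShift A) :
    ∃ K, IsCompact K ∧ ∀ n, T^[n] y ∈ K := by
  obtain ⟨C, hC⟩ := hV.bounded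
  refine exists_isCompact_forall_iterate_mem hT (hw.finite_setOf_le (c - 2 * C))
    (fun x => ⟨T x, rfl, ?_⟩) y
  have hx := hTR x
  rw [normalized] at hx
  linarith [abs_le.1 (hC (T x)), abs_le.1 (hC (shift (T x)))]

theorem boundedFun_truncation (hV : IsCalibrated f V c) :
    BoundedFun fun x => max (normalized f V c x) (-1) :=
  ⟨1, fun x => abs_le.2 ⟨le_max_right _ _, max_le ((hV.nonpos x).trans zero_le_one) (by norm_num)⟩⟩

theorem ae_eq_zero_of_le_integral (hV : IsCalibrated f V c) (hf : Continuous f)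
    [IsFiniteMeasure μ] (hμ : 0 ≤ ∫ x, max (normalized f V c x) (-1) ∂μ) :
    ∀ᵐ x ∂μ, normalized f V c x = 0 := by
  have truncation_nonpos (x : MarkovShift A) : max (normalized f V c x) (-1) ≤ 0 :=
    max_le (hV.nonpos x) (by norm_num)
  have truncation_integrable : Integrable (fun x => max (normalized f V c x) (-1)) μ :=
    hV.boundedFun_truncation.integrable ((hV.continuous_normalized hf).max continuous_const) μ
  have truncation_ae := (integral_eq_zero_iff_of_nonneg
    (fun x => neg_nonneg.2 (truncation_nonpos x)) truncation_integrable.neg).1 <| by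
      rw [integral_neg, neg_eq_zero]
      exact (integral_nonpos truncation_nonpos).antisymm hμ
  filter_upwards [truncation_ae] with x hx
  have hx0 : max (normalized f V c x) (-1) = 0 := neg_eq_zero.1 hx
  rcases max_choice (normalized f V c x) (-1) with h | h
  · rw [← h, hx0]
  · linarith

/-- Starting from `y`, follow preimages on which `normalized f V c` vanishes. -/
theorem exists_invariant (hV : IsCalibrated f V c) (hf : Continuous f) (hw : DominatedBy f w)
    (y : MarkovShift A) : ∃ μ, IsInvariantProb μ ∧ (∀ᵐ x ∂μ, normalized f V c x = 0) ∧
      ∀ D : MarkovShift A → ℝ, Continuous D → BoundedFun D →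
        (∀ x, normalized f V c x = 0 → D (shift x) ≤ D x) → D y ≤ ∫ x, D x ∂μ := by
  choose T hT hTR using hV.exists_eq_zero
  obtain ⟨K, hK, hTK⟩ := hV.exists_isCompact_backward_orbit hw hT hTR y
  obtain ⟨μ, hμ, hμσ, hle⟩ :=
    exists_measurePreserving_le_integral continuous_shift hT hK fun n => hTK (n + 1)
  have le_integral (g : MarkovShift A → ℝ) (hg : Continuous g) (hgb : BoundedFun g) (b : ℝ)
      (hb : ∀ n, b ≤ g (T^[n + 1] y)) : b ≤ ∫ x, g x ∂μ :=
    hle (.ofNormedAddCommGroup g hg hgb.choose hgb.choose_spec) b hb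
  refine ⟨μ, ⟨hμ, hμσ.map_eq⟩, ?_, fun D hD hDb hD_le => le_integral D hD hDb _ fun n => ?_⟩
  · refine hV.ae_eq_zero_of_le_integral hf <| le_integral _
      ((hV.continuous_normalized hf).max continuous_const)
      (hV.boundedFun_truncation) 0 fun n => ?_
    rw [Function.iterate_succ_apply', hTR]
    exact le_max_left _ _
  · have step (x : MarkovShift A) : D x ≤ D (T x) := by
      simpa only [hT x] using hD_le (T x) (hTR x)
    exact monotone_nat_of_le_succ (f := fun n => D (T^[n] y))
      (fun n => by simpa only [Function.iterate_succ_apply'] using step _) (Nat.zero_le (n + 1))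

theorem mf_eq [Nonempty (MarkovShift A)] (hV : IsCalibrated f V c) (hf : Continuous f)
    (hw : DominatedBy f w) : mf f = c := by
  obtain ⟨μ, hμ, hR, -⟩ := hV.exists_invariant hf hw (Classical.arbitrary _)
  obtain ⟨hfμ, hint⟩ := hV.integral_eq hμ hR
  refine IsGreatest.csSup_eq ⟨⟨μ, hμ, hfμ, hint⟩, ?_⟩
  rintro _ ⟨ρ, hρ, hfρ, rfl⟩
  exact hV.integral_le hρ hfρ

theorem sub_le_integral (hV : IsCalibrated f V (mf f)) (hW : IsCalibrated f W (mf f))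
    (hf : Continuous f) (hw : DominatedBy f w) (huniq : ∀ ρ, IsMaximizing f ρ → ρ = μ)
    (y : MarkovShift A) : V y - W y ≤ ∫ x, (V x - W x) ∂μ := by
  obtain ⟨ρ, hρ, hR, hle⟩ := hV.exists_invariant hf hw y
  obtain rfl := huniq ρ ⟨hρ, hV.integral_eq hρ hR⟩
  refine hle (V - W) (hV.continuous.sub hW.continuous) (hV.bounded.sub hW.bounded) fun x hx => ?_
  have hWx := hW.nonpos x
  rw [normalized] at hx hWx
  simp only [Pi.sub_apply]
  linarith

theorem exists_eq_sub_const (hV : IsCalibrated f V (mf f)) (hW : IsCalibrated f W (mf f))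
    (hf : Continuous f) (hw : DominatedBy f w) (huniq : ∀ ρ, IsMaximizing f ρ → ρ = μ) :
    ∃ b, ∀ x, V x = W x - b := by
  refine ⟨∫ x, (W x - V x) ∂μ, fun x => ?_⟩
  have hVW := hV.sub_le_integral hW hf hw huniq x
  have hWV := hW.sub_le_integral hV hf hw huniq x
  have hneg : ∫ x, (V x - W x) ∂μ = -∫ x, (W x - V x) ∂μ := by
    rw [← integral_neg]
    simp only [neg_sub]
  linarith

end IsCalibrated

end

/-! ### Zero-temperature limits -/

section

variable {A : ℕ → ℕ → Bool} {f V h : MarkovShift A → ℝ} {w : ℕ → ℝ} {y : MarkovShift A}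

theorem exists_shift_eq_not_tendsto_atBot {ι : Type*} {l : Filter ι} [l.NeBot]
    {g : ι → MarkovShift A → ℝ} (hg : ∀ᶠ i in l, DominatedBy (g i) w)
    (hgy : ∀ᶠ i in l, ruelle (g i) (fun _ => 1) y = 1) :
    ∃ x, shift x = y ∧ ¬Tendsto (fun i => g i x) l atBot := by
  by_contra! hbot
  have term_tendsto (a : ℕ) : Tendsto (fun i => ruelleTerm (g i) (fun _ => 1) y a) l (𝓝 0) := by
    simp only [ruelleTerm, mul_one]
    split_ifs with ha
    · exact Real.tendsto_exp_atBot.comp (hbot _ (shift_cons a y ha))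
    · exact tendsto_const_nhds
  obtain ⟨i₀, hi₀⟩ := hg.exists
  have tsum_tendsto : Tendsto (fun i => ∑' a, ruelleTerm (g i) (fun _ => 1) y a) l
      (𝓝 (∑' _ : ℕ, (0 : ℝ))) := by
    refine tendsto_tsum_of_dominated_convergence hi₀.summable term_tendsto ?_
    filter_upwards [hg] with i hi a
    rw [Real.norm_of_nonneg (ruelleTerm_nonneg (fun _ => zero_le_one) y a)]
    simpa only [mul_one] using hi.ruelleTerm_le zero_le_one (fun _ => le_rfl) y a
  simp only [← ruelle_eq_tsum, tsum_zero] at tsum_tendsto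
  exact zero_ne_one (tendsto_nhds_unique tsum_tendsto
    (tendsto_const_nhds.congr' (hgy.mono fun _ h => h.symm)))

theorem normalized_sub_const (f V : MarkovShift A → ℝ) (c b : ℝ) :
    normalized f (fun x => V x - b) c = normalized f V c := by
  funext x
  simp only [normalized]
  ring

theorem tendsto_normalized {ι : Type*} {l : Filter ι} {v : ι → MarkovShift A → ℝ} {c : ι → ℝ}
    {c₀ : ℝ} (hv : ∀ x, Tendsto (fun i => v i x) l (𝓝 (V x))) (hc : Tendsto c l (𝓝 c₀))
    (x : MarkovShift A) :
    Tendsto (fun i => normalized f (v i) (c i) x) l (𝓝 (normalized f V c₀ x)) :=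
  (((hv x).const_add (f x)).sub (hv (shift x))).sub hc

/-- The potential `g_β / β`, for the eigenfunction `h` of `L_{βf}` with eigenvalue `exp p`. -/
noncomputable def rpfNormalized (f : MarkovShift A → ℝ) (β p : ℝ) (h : MarkovShift A → ℝ) :
    MarkovShift A → ℝ :=
  normalized f (fun x => Real.log (h x) / β) (p / β)

theorem rpfNormalized_eq_div {β : ℝ} (hβ : β ≠ 0) (p : ℝ) (h : MarkovShift A → ℝ)
    (x : MarkovShift A) : rpfNormalized f β p h x =
      (β * f x + Real.log (h x) - Real.log (h (shift x)) - p) / β := by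
  rw [rpfNormalized, normalized]
  field_simp

namespace IsRPF

variable {p β : ℝ} {ν : Measure (MarkovShift A)}

theorem exp_mul_rpfNormalized (H : IsRPF (fun x => β * f x) p h ν) (hβ : β ≠ 0)
    (z : MarkovShift A) :
    Real.exp (β * rpfNormalized f β p h z) =
      (Real.exp p * h (shift z))⁻¹ * (Real.exp (β * f z) * h z) := by
  rw [rpfNormalized_eq_div hβ, mul_div_cancel₀ _ hβ, Real.exp_sub, Real.exp_sub, Real.exp_add,
    Real.exp_log (H.pos _), Real.exp_log (H.pos _)]
  ring

theorem ruelle_rpfNormalized_one (H : IsRPF (fun x => β * f x) p h ν) (hβ : β ≠ 0)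
    (y : MarkovShift A) :
    ruelle (fun x => β * rpfNormalized f β p h x) (fun _ => 1) y =
      1 := by
  have hfiber (z : {z // shift z = y}) :
      Real.exp (β * rpfNormalized f β p h z.1) * 1 =
        (Real.exp p * h y)⁻¹ * (Real.exp (β * f z.1) * h z.1) := by
    rw [mul_one, H.exp_mul_rpfNormalized hβ, z.2]
  rw [ruelle, tsum_congr hfiber, tsum_mul_left]
  have heigen := H.2.2.1 y
  rw [ruelle] at heigen
  rw [heigen]
  exact inv_mul_cancel₀ (mul_pos (Real.exp_pos p) (H.pos y)).ne'

theorem rpfNormalized_nonpos (H : IsRPF (fun x => β * f x) p h ν) (hβ : 0 < β)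
    (z : MarkovShift A) : rpfNormalized f β p h z ≤ 0 := by
  have hz := H.ruelleSummable.exp_birkhoff_mul_le 1 z
  rw [birkhoff_one, Function.iterate_one, Function.iterate_one, H.2.2.1] at hz
  have hexp : Real.exp (β * rpfNormalized f β p h z) ≤ 1 := by
    rw [H.exp_mul_rpfNormalized hβ.ne']
    exact inv_mul_le_one_of_le₀ hz (mul_pos (Real.exp_pos p) (H.pos _)).le
  exact nonpos_of_mul_nonpos_right (Real.exp_le_one_iff.1 hexp) hβ

theorem sub_le_pressure_div (H : IsRPF (fun x => β * f x) p h ν) (hβ : 0 < β) {C : ℝ}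
    (hC : ∀ x y, |Real.log (h x) / β - Real.log (h y) / β| ≤ C) (x : MarkovShift A) :
    f x - C ≤ p / β := by
  have hx := H.rpfNormalized_nonpos hβ x
  rw [rpfNormalized, normalized] at hx
  linarith [(abs_le.1 (hC x (shift x))).1]

theorem dominatedBy_rpfNormalized (H : IsRPF (fun x => β * f x) p h ν) (hβ : 1 ≤ β)
    (hw : DominatedBy f w) {C : ℝ} (hC : ∀ x y, |Real.log (h x) / β - Real.log (h y) / β| ≤ C)
    (x₀ : MarkovShift A) :
    DominatedBy (fun x => β * rpfNormalized f β p h x)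
      fun a => w a * Real.exp (2 * C - f x₀) where
  nonneg a := mul_nonneg (hw.nonneg a) (Real.exp_pos _).le
  summable := hw.summable.mul_right _
  exp_le x := by
    have hβ0 : 0 < β := one_pos.trans_le hβ
    have mul_le_self := mul_le_mul_of_nonpos_right hβ (H.rpfNormalized_nonpos hβ0 x)
    have rpfNormalized_le : rpfNormalized f β p h x ≤
        f x + (2 * C - f x₀) := by
      rw [rpfNormalized, normalized]
      linarith [(abs_le.1 (hC x (shift x))).2, H.sub_le_pressure_div hβ0 hC x₀]
    calc _ ≤ Real.exp (f x + (2 * C - f x₀)) := Real.exp_le_exp.2 (by linarith)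
      _ = Real.exp (f x) * Real.exp (2 * C - f x₀) := Real.exp_add _ _
      _ ≤ w (x.1 0) * Real.exp (2 * C - f x₀) :=
        mul_le_mul_of_nonneg_right (hw.exp_le x) (Real.exp_pos _).le

end IsRPF

section

variable {P : ℝ → ℝ} {h : ℝ → MarkovShift A → ℝ} {ν : ℝ → Measure (MarkovShift A)}

/-- The sum of `exp (g_β)` over a fibre equals `1`, so `g_β` cannot tend to `-∞` along the whole
fibre. -/
theorem isCalibrated_of_tendsto {l : Filter ℝ} [l.NeBot] (hl : l ≤ atTop) {c C : ℝ}
    (hH : ∀ β, 1 < β → IsRPF (fun x => β * f x) (P β) (h β) (ν β)) (hw : DominatedBy f w)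
    (hC : ∀ β, 1 < β → ∀ x y, |Real.log (h β x) / β - Real.log (h β y) / β| ≤ C)
    (hV : Continuous V) (hVb : BoundedFun V)
    (hlim : ∀ x, Tendsto (fun β => rpfNormalized f β (P β) (h β) x) l
      (𝓝 (normalized f V c x))) : IsCalibrated f V c := by
  have one_lt : ∀ᶠ β in l, 1 < β := hl (eventually_gt_atTop 1)
  have nonpos (x : MarkovShift A) : normalized f V c x ≤ 0 :=
    le_of_tendsto (hlim x) (one_lt.mono fun β hβ =>
      (hH β hβ).rpfNormalized_nonpos (one_pos.trans hβ) x)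
  refine ⟨hV, hVb, nonpos, fun y => ?_⟩
  obtain ⟨x, hxy, hx⟩ := exists_shift_eq_not_tendsto_atBot
    (one_lt.mono fun β hβ => (hH β hβ).dominatedBy_rpfNormalized hβ.le hw (hC β hβ) y)
    (one_lt.mono fun β hβ => (hH β hβ).ruelle_rpfNormalized_one (one_pos.trans hβ).ne' y)
  refine ⟨x, hxy, (nonpos x).eq_of_not_lt fun hlt => hx ?_⟩
  exact Tendsto.atTop_mul_neg hlt hl (hlim x)

theorem exists_isCalibrated_tendsto (hA : FinitelyPrimitive A) (hf : SatisfiesWalters f)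
    (hf₁ : Var1Finite f) (hw : DominatedBy f w)
    (hH : ∀ β, 1 < β → IsRPF (fun x => β * f x) (P β) (h β) (ν β)) (x₀ : MarkovShift A)
    (U : Ultrafilter ℝ) (hU : (U : Filter ℝ) ≤ atTop) :
    ∃ W c, IsCalibrated f W c ∧ VariationBound 1 (waltersSup f) W ∧
      ∀ x, Tendsto (fun β => rpfNormalized f β (P β) (h β) x) U
        (𝓝 (normalized f W c x)) := by
  obtain ⟨C, hC⟩ := IsRPF.exists_abs_log_div_sub_le hA hf hf₁ hw
  replace hC := fun β (hβ : 1 < β) => hC β _ _ _ hβ.le (hH β hβ)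
  have one_lt : ∀ᶠ β in (U : Filter ℝ), 1 < β := hU (eventually_gt_atTop 1)
  choose W hWC hW using fun x => exists_tendsto_of_eventually_mem_of_isCompact isCompact_Icc
    (u := fun β => Real.log (h β x) / β - Real.log (h β x₀) / β)
    (one_lt.mono fun β hβ => abs_le.1 (hC β hβ x x₀))
  obtain ⟨c, -, hc⟩ := exists_tendsto_of_eventually_mem_of_isCompact isCompact_Icc
    (u := fun β => P β / β)
    (one_lt.mono fun β hβ => ⟨(hH β hβ).sub_le_pressure_div (one_pos.trans hβ) (hC β hβ) x₀,
      (hH β hβ).pressure_div_le hf.continuous hw hβ.le⟩)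
  have hWvar : VariationBound 1 (waltersSup f) W := .of_tendsto (one_lt.mono fun β hβ =>
    ((hH β hβ).variationBound_log_div hA hf hw hβ.le).sub_const (Real.log (h β x₀) / β)) hW
  have hlim := tendsto_normalized (f := f) hW hc
  simp only [normalized_sub_const] at hlim
  exact ⟨W, c, isCalibrated_of_tendsto hU hH hw hC (hWvar.continuous hf.2)
    ⟨C, fun x => abs_le.2 (hWC x)⟩ hlim, hWvar, hlim⟩

variable {μ : Measure (MarkovShift A)}

/-- By uniqueness of the maximizing measure, every zero-temperature limit is `V` up to an additive
constant. -/
theorem IsCalibrated.variationBound_and_tendsto [Nonempty (MarkovShift A)]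
    (hV : IsCalibrated f V (mf f)) (huniq : ∀ ρ, IsMaximizing f ρ → ρ = μ)
    (hA : FinitelyPrimitive A) (hf : SatisfiesWalters f)
    (hf₁ : Var1Finite f) (hw : DominatedBy f w)
    (hH : ∀ β, 1 < β → IsRPF (fun x => β * f x) (P β) (h β) (ν β))
    (U : Ultrafilter ℝ) (hU : (U : Filter ℝ) ≤ atTop) :
    VariationBound 1 (waltersSup f) V ∧
      ∀ x, Tendsto (fun β => rpfNormalized f β (P β) (h β) x) U
        (𝓝 (normalized f V (mf f) x)) := by
  obtain ⟨W, c, hW, hWvar, hlim⟩ :=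
    exists_isCalibrated_tendsto hA hf hf₁ hw hH (Classical.arbitrary _) U hU
  obtain rfl := hW.mf_eq hf.continuous hw
  obtain ⟨b, hb⟩ := hV.exists_eq_sub_const hW hf.continuous hw huniq
  obtain rfl : V = fun x => W x - b := funext hb
  rw [normalized_sub_const]
  exact ⟨hWvar.sub_const b, hlim⟩

end

end

/-- `g_β/β → R₋ = f + V - V∘σ - m(f)` uniformly on compact sets, with the stated
variation bounds `Var_n(g_β/β) ≤ M_n`, `Var_n(R₋) ≤ M_n`, `M_n → 0`, and
`Var_{n+k}(R₋ⁿ) ≤ Var_{n+k}(S_n f) + M_{n+k} + M_k`. -/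
theorem gbeta_converges_to_Rminus
    (A : ℕ → ℕ → Bool)
    (hmix : TopologicallyMixing A)
    (hbip : FinitelyPrimitive A)
    (f : MarkovShift A → ℝ)
    (hWalters : SatisfiesWalters f)
    (hVar1 : Var1Finite f)
    (P : ℝ → ℝ)
    (hPfin : HasGurevichPressure f (P 1))
    (μmax : Measure (MarkovShift A))
    (hmax : IsMaximizing f μmax)
    (huniq : ∀ ν', IsMaximizing f ν' → ν' = μmax)
    (h : ℝ → MarkovShift A → ℝ)
    (ν : ℝ → Measure (MarkovShift A))
    (hRPF : ∀ β : ℝ, 1 < β → IsRPF (fun x => β * f x) (P β) (h β) (ν β))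
    (V : MarkovShift A → ℝ)
    (hV : IsCalibratedSubaction f V)
    (gβ : ℝ → MarkovShift A → ℝ)
    (hgβ : ∀ β x, gβ β x =
      β * f x + Real.log (h β x) - Real.log (h β (shift x)) - P β)
    (Rm : MarkovShift A → ℝ)
    (hRm : ∀ x, Rm x = f x + V x - V (shift x) - mf f) :
    (∀ K : Set (MarkovShift A), IsCompact K →
        TendstoUniformlyOn (fun (β : ℝ) (x : MarkovShift A) => gβ β x / β) Rm atTop K) ∧
      ∃ M : ℕ → ℝ, Tendsto M atTop (𝓝 0) ∧
        (∃ N : ℕ, ∀ n ≥ N,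
          (∀ β : ℝ, 1 < β → ∀ x y : MarkovShift A, (∀ i < n, x.1 i = y.1 i) →
            |gβ β x / β - gβ β y / β| ≤ M n) ∧
          (∀ x y : MarkovShift A, (∀ i < n, x.1 i = y.1 i) → |Rm x - Rm y| ≤ M n)) ∧
        (∀ n k : ℕ, 1 ≤ n → 1 ≤ k → ∀ x y : MarkovShift A, (∀ i < n + k, x.1 i = y.1 i) →
          |birkhoff Rm n x - birkhoff Rm n y| ≤ varBirk f n (n + k) + M (n + k) + M k) := by
  have := hmax.1.1
  have : Nonempty (MarkovShift A) := μmax.nonempty_of_neZero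
  obtain ⟨w, hw⟩ := exists_dominatedBy hbip hVar1 hPfin
  have hlim := (isCalibratedSubaction_iff.1 hV).variationBound_and_tendsto huniq hbip hWalters
    hVar1 hw hRPF
  have hVvar := (hlim (.of atTop) (Ultrafilter.of_le atTop)).1
  obtain rfl : Rm = normalized f V (mf f) := funext hRm
  have gβ_div {β : ℝ} (hβ : 1 < β) : (fun x => gβ β x / β) = rpfNormalized f β (P β) (h β) := by
    funext x
    rw [hgβ, rpfNormalized_eq_div (one_pos.trans hβ).ne']
  have gβ_var (β : ℝ) (hβ : 1 < β) :
      VariationBound 2 (normalizedModulus f) fun x => gβ β x / β := by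
    rw [gβ_div hβ]
    exact hWalters.variationBound_normalized
      ((hRPF β hβ).variationBound_log_div hbip hWalters hw hβ.le) _
  have R_var := hWalters.variationBound_normalized hVvar (mf f)
  refine ⟨fun K hK => ?_, normalizedModulus f, hWalters.tendsto_normalizedModulus,
    ⟨2, fun n hn => ⟨fun β hβ => gβ_var β hβ n hn, R_var n hn⟩⟩, fun n k hn hk x y hxy => ?_⟩
  · refine tendstoUniformlyOn_of_variationBound hWalters.tendsto_normalizedModulus
      ((eventually_gt_atTop 1).mono gβ_var) R_var (fun x => ?_) hK
    refine ((tendsto_iff_ultrafilter _ _ _).2 fun U hU => (hlim U hU).2 x).congr' ?_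
    filter_upwards [eventually_gt_atTop 1] with β hβ using (congrFun (gβ_div hβ) x).symm
  · linarith [hWalters.abs_birkhoff_normalized_sub_le hVvar (mf f) hn hk hxy,
      waltersSup_le_normalizedModulus f (n + k), waltersSup_le_normalizedModulus f k]

end MarkovShift
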